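/- Let H be a pointed Hopf algebra of discrete corepresentation type over an algebraically closed field K, and let B be the link-indecomposable component of H containing 1 (which is a Hopf subalgebra). Then the Ext-quiver Q of the category of right B-comodules is one of the following: (1) a single vertex, and G(B) = {1}; (2) a complete oriented cycle, and G(B) = ⟨a | aⁿ = 1⟩; (3) the doubly infinite linear quiver ··· → · → · → · → ···, and G(B) = ⟨a⟩ infinite cyclic; (4) the (folded) grid quiver Q^{m,n}, and G(B) = ⟨a,b | ab = ba, aᵐ = bⁿ⟩ for some pair of integers (m,n) ≠ ±(1,1). Moreover, the Ext-quiver of the category of right H-comodules is a (possibly infinite) disjoint union of copies of this quiver. -/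

import Mathlib

open TensorProduct



section Basic

variable (K : Type) [CommRing K] (H : Type) [AddCommGroup H] [Module K H] [Coalgebra K H]

/-- A grouplike element of a coalgebra. -/
def IsGrouplike (g : H) : Prop :=
  Coalgebra.counit (R := K) g = 1 ∧ Coalgebra.comul (R := K) g = g ⊗ₜ[K] g

/-- The space `P(g,h)` of `(g,h)`-skew primitive elements. -/
noncomputable def skewPrim (g h : H) : Submodule K H :=
  LinearMap.ker (Coalgebra.comul (R := K) (A := H)
    - (TensorProduct.mk K H H g + (TensorProduct.mk K H H).flip h))

lemma mem_skewPrim {g h x : H} :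
    x ∈ skewPrim K H g h ↔ Coalgebra.comul (R := K) x = g ⊗ₜ[K] x + x ⊗ₜ[K] h := by
  rw [skewPrim, LinearMap.mem_ker, LinearMap.sub_apply, sub_eq_zero, LinearMap.add_apply]
  rfl

/-- A submodule which is a subcoalgebra. -/
def IsSubcoalgebra (D : Submodule K H) : Prop :=
  ∀ x ∈ D, Coalgebra.comul (R := K) x ∈ LinearMap.range (TensorProduct.map D.subtype D.subtype)

/-- A coalgebra is pointed if every simple subcoalgebra is one-dimensional. -/
def IsPointedCoalgebra : Prop :=
  ∀ D : Submodule K H, IsSubcoalgebra K H D → D ≠ ⊥ →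
    (∀ D' : Submodule K H, IsSubcoalgebra K H D' → D' ≤ D → D' = ⊥ ∨ D' = D) →
    Module.finrank K ↥D = 1

end Basic

section Comodules

variable (K : Type) [CommRing K] (H : Type) [AddCommGroup H] [Module K H] [Coalgebra K H]

/-- A (finite or infinite dimensional) right `H`-comodule. -/
structure Comod where
  carrier : Type
  [acg : AddCommGroup carrier]
  [mod : Module K carrier]
  ρ : carrier →ₗ[K] carrier ⊗[K] H
  counit_comp : ∀ m : carrier,
    (TensorProduct.rid K carrier)
      ((LinearMap.lTensor carrier (Coalgebra.counit (R := K) (A := H))) (ρ m)) = m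
  coassoc : ∀ m : carrier,
    (LinearMap.lTensor carrier (Coalgebra.comul (R := K) (A := H))) (ρ m)
      = (TensorProduct.assoc K carrier H H) ((LinearMap.rTensor H ρ) (ρ m))

attribute [instance] Comod.acg Comod.mod

/-- A morphism of right `H`-comodules. -/
structure ComodHom (M N : Comod K H) where
  toLin : M.carrier →ₗ[K] N.carrier
  compat : ∀ m : M.carrier, N.ρ (toLin m) = (LinearMap.rTensor H toLin) (M.ρ m)

/-- Isomorphism of comodules. -/
def ComodIso (M N : Comod K H) : Prop :=
  ∃ f : ComodHom K H M N, Function.Bijective f.toLin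

/-- An indecomposable comodule: it is nonzero, and (equivalently to the usual definition,
since idempotents split in comodule categories) every idempotent endomorphism is `0` or `1`. -/
def Comod.Indec (M : Comod K H) : Prop :=
  (∃ m : M.carrier, m ≠ 0) ∧
    ∀ f : ComodHom K H M M, f.toLin ∘ₗ f.toLin = f.toLin →
      f.toLin = 0 ∨ f.toLin = LinearMap.id

/-- A submodule of a comodule which is a subcomodule. -/
def IsSubcomod (M : Comod K H) (N : Submodule K M.carrier) : Prop :=
  ∀ m ∈ N, M.ρ m ∈ LinearMap.range (LinearMap.rTensor H N.subtype)

/-- The coaction of `M` factors through the subcoalgebra `D`, i.e. `M` is a `D`-comodule. -/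
def CoactsThrough (M : Comod K H) (D : Submodule K H) : Prop :=
  ∀ m : M.carrier, M.ρ m ∈ LinearMap.range (LinearMap.lTensor M.carrier D.subtype)

/-- `M` has dimension vector `d` : it admits a composition series whose successive quotients
are the one-dimensional comodules associated to grouplike elements, where for every `h` the
grouplike `h` occurs exactly `d h` times. -/
def HasDimVector (M : Comod K H) (d : H → ℕ) : Prop :=
  ∃ (k : ℕ) (F : Fin (k+1) → Submodule K M.carrier) (g : Fin k → H),
    F 0 = ⊥ ∧ F (Fin.last k) = ⊤ ∧
    (∀ i : Fin k, F i.castSucc ≤ F i.succ) ∧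
    (∀ i : Fin (k+1), IsSubcomod K H M (F i)) ∧
    (∀ i : Fin k, IsGrouplike K H (g i)) ∧
    (∀ i : Fin k, ∃ m : M.carrier, m ∈ F i.succ ∧ m ∉ F i.castSucc ∧
        F i.succ = F i.castSucc ⊔ Submodule.span K {m}) ∧
    (∀ i : Fin k, ∀ m ∈ F i.succ,
        M.ρ m - m ⊗ₜ[K] (g i) ∈ LinearMap.range (LinearMap.rTensor H (F i.castSucc).subtype)) ∧
    (∀ h : H, d h = Nat.card {i : Fin k // g i = h})

/-- A pointed coalgebra is of discrete corepresentation type if for every dimension vector `d`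
there are only finitely many isomorphism classes of indecomposable comodules with
dimension vector `d`. -/
def DiscreteCorepType : Prop :=
  ∀ d : H → ℕ, ∃ (N : ℕ) (R : Fin N → Comod K H),
    ∀ M : Comod K H, M.Indec K H → HasDimVector K H M d → ∃ i, ComodIso K H M (R i)

/-- A subcoalgebra `D ≤ H` is of finite corepresentation type: there are only finitely many
isomorphism classes of finite-dimensional indecomposable comodules whose coaction factors
through `D`. -/
def FinCorepTypeOn (D : Submodule K H) : Prop :=
  ∃ (N : ℕ) (R : Fin N → Comod K H),
    ∀ M : Comod K H, M.Indec K H → Module.Finite K M.carrier → CoactsThrough K H M D →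
      ∃ i, ComodIso K H M (R i)

/-- A coalgebra is of finite corepresentation type. -/
def FinCorepType : Prop := FinCorepTypeOn K H ⊤

end Comodules

open scoped Classical

section Pointed

variable (K : Type) [CommRing K] (H : Type) [Ring H] [Bialgebra K H]

/-- `g` is a grouplike element belonging to the subcoalgebra `B`. -/
def grouplikeIn (B : Submodule K H) (g : H) : Prop := IsGrouplike K H g ∧ g ∈ B

/-- In the Ext-quiver of the subcoalgebra `B`, there are exactly `c` arrows from the
grouplike `g` to the grouplike `h` : since the trivial skew primitive `g - h` is nonzero
precisely when `g ≠ h`, this says `dim (P(g,h) ⊓ B) = c + 1` for `g ≠ h`, and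
`dim (P(g,g) ⊓ B) = c` for loops. -/
def arrowsEq (B : Submodule K H) (g h : H) (c : ℕ) : Prop :=
  Module.rank K ↥(skewPrim K H g h ⊓ B) = if g = h then (c : Cardinal) else (c : Cardinal) + 1

/-- The number of arrows from `g` to `h` in the Ext-quiver, as a cardinal: the dimension of
the space of skew primitives modulo the trivial ones. -/
noncomputable def ntRank (g h : H) : Cardinal :=
  Module.rank K
    (↥(skewPrim K H g h) ⧸
      Submodule.comap (skewPrim K H g h).subtype (Submodule.span K {g - h}))

/-- Two grouplikes are linked in `D` if there is a nontrivial skew primitive (in either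
direction) between them lying in `D`. -/
def LinkedIn (D : Submodule K H) (g h : H) : Prop :=
  ∃ x ∈ D, (x ∈ skewPrim K H g h ∨ x ∈ skewPrim K H h g) ∧ x ∉ Submodule.span K {g - h}

/-- The Ext-quiver of the subcoalgebra `D` is connected. -/
def ConnectedOn (D : Submodule K H) : Prop :=
  ∀ g h : H, IsGrouplike K H g → g ∈ D → IsGrouplike K H h → h ∈ D →
    Relation.ReflTransGen (LinkedIn K H D) g h

/-- `B` is the link-indecomposable component containing `1` : a subcoalgebra containing `1`,
maximal with respect to its Ext-quiver being connected. -/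
structure IsLIC1 (B : Submodule K H) : Prop where
  subcoalg : IsSubcoalgebra K H B
  one_mem : (1 : H) ∈ B
  connected : ConnectedOn K H B
  maximal : ∀ B' : Submodule K H, IsSubcoalgebra K H B' → ConnectedOn K H B' →
    B ≤ B' → B' = B

end Pointed

/-- `a^i * a'^(-i)`, i.e. the `i`-th power (for `i : ℤ`) of `a` when `a'` is a two-sided
inverse of `a`. -/
def zp {B : Type} [Monoid B] (a a' : B) (i : ℤ) : B := a ^ i.toNat * a' ^ (-i).toNat

section Hopf

variable (K : Type) [CommRing K] (H : Type) [Ring H] [HopfAlgebra K H]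

/-- The antipode applied to an element; for a grouplike `g` this is its inverse `g⁻¹`. -/
noncomputable def inv' (g : H) : H := HopfAlgebra.antipode (R := K) g

/-- The Ext-quiver of the subcoalgebra `B` is the (possibly folded) grid quiver `Q^{m,n}` :
the grouplikes of `B` form the group `⟨a, b | ab = ba, aᵐ = bⁿ⟩`, and at each vertex `g`
there is exactly one arrow `g → g·a` and one arrow `g → g·b`, and no other arrows. -/
def GridQuiverOn (B : Submodule K H) (a b : H) (m n : ℤ) : Prop :=
  grouplikeIn K H B a ∧ grouplikeIn K H B b ∧ a * b = b * a ∧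
  a * inv' K H a = 1 ∧ inv' K H a * a = 1 ∧ b * inv' K H b = 1 ∧ inv' K H b * b = 1 ∧
  (∀ i j : ℤ, zp a (inv' K H a) i * zp b (inv' K H b) j = 1 ↔
      ∃ l : ℤ, i = l * m ∧ j = -(l * n)) ∧
  (∀ g : H, grouplikeIn K H B g ↔
      ∃ i j : ℤ, g = zp a (inv' K H a) i * zp b (inv' K H b) j) ∧
  (∀ g h : H, grouplikeIn K H B g → grouplikeIn K H B h →
      arrowsEq K H B g h (if h = g * a ∨ h = g * b then 1 else 0))

/-- The Ext-quiver of `B` is a single vertex, and `G(B) = {1}`. -/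
def SingleVertexQuiver (B : Submodule K H) : Prop :=
  (∀ g : H, grouplikeIn K H B g ↔ g = 1) ∧ arrowsEq K H B 1 1 0

/-- The Ext-quiver of `B` is a complete oriented cycle, and `G(B) = ⟨a | aⁿ = 1⟩`. -/
def CycleQuiver (B : Submodule K H) : Prop :=
  ∃ (a : H) (nn : ℕ), 0 < nn ∧ grouplikeIn K H B a ∧ a ^ nn = 1 ∧
    (∀ kk : ℕ, 0 < kk → kk < nn → a ^ kk ≠ 1) ∧
    (∀ g : H, grouplikeIn K H B g ↔ ∃ i : ℕ, g = a ^ i) ∧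
    (∀ g h : H, grouplikeIn K H B g → grouplikeIn K H B h →
      arrowsEq K H B g h (if h = g * a then 1 else 0))

/-- The Ext-quiver of `B` is the doubly infinite linear quiver `··· → · → · → ···`, and
`G(B) = ⟨a⟩` is infinite cyclic. -/
def LineQuiver (B : Submodule K H) : Prop :=
  ∃ a : H, grouplikeIn K H B a ∧ (∀ kk : ℕ, 0 < kk → a ^ kk ≠ 1) ∧
    (∀ g : H, grouplikeIn K H B g ↔ ∃ i j : ℕ, a ^ i * g = a ^ j) ∧
    (∀ g h : H, grouplikeIn K H B g → grouplikeIn K H B h →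
      arrowsEq K H B g h (if h = g * a then 1 else 0))

end Hopf

/-!
A cycle in the separated quiver, whose vertices are two copies of the set of grouplikes and whose
arrows run from the first copy to the second, carries a one-parameter family of pairwise
non-isomorphic indecomposable band comodules of a single dimension vector. Over an infinite field,
discreteness therefore forbids such cycles.

In a Hopf algebra, translation by grouplikes makes the Ext-quiver a Cayley digraph: it is determined
by the set `S` of targets of arrows starting at `1`, which is stable under conjugation. Alternating
translates of two labels `a ≠ b` close up to a separated cycle if `a * b⁻¹` has finite order, and
three distinct labels produce a separated hexagon. Hence `S` has at most two elements, two labels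
commute, and all their relations follow from a single one `a ^ m = b ^ n`. The grouplikes of the
component of `1` form the group generated by `S`.
-/

section TensorRange

variable {K : Type*} [CommRing K] {M H : Type*} [AddCommGroup M] [Module K M] [AddCommGroup H]
  [Module K H]

lemma range_rTensor_subtype_mono {N N' : Submodule K M} (hN : N ≤ N') :
    LinearMap.range (LinearMap.rTensor H N.subtype) ≤
      LinearMap.range (LinearMap.rTensor H N'.subtype) := by
  rw [← Submodule.subtype_comp_inclusion N N' hN, LinearMap.rTensor_comp]
  exact LinearMap.range_comp_le_range _ _

lemma tmul_mem_range_rTensor_subtype {N : Submodule K M} {m : M} (hm : m ∈ N) (x : H) :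
    m ⊗ₜ[K] x ∈ LinearMap.range (LinearMap.rTensor H N.subtype) :=
  ⟨(⟨m, hm⟩ : N) ⊗ₜ[K] x, rfl⟩

end TensorRange

section ComodIso

variable {K : Type} [CommRing K] {H : Type} [AddCommGroup H] [Module K H] [Coalgebra K H]

lemma ComodIso.symm {M N : Comod K H} (hMN : ComodIso K H M N) : ComodIso K H N M := by
  obtain ⟨f, hf⟩ := hMN
  let e := LinearEquiv.ofBijective f.toLin hf
  refine ⟨⟨e.symm.toLinearMap, fun n => ?_⟩, e.symm.bijective⟩
  obtain ⟨m, rfl⟩ := e.surjective n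
  have compat : N.ρ (e m) = LinearMap.rTensor H e.toLinearMap (M.ρ m) := f.compat m
  change M.ρ (e.symm (e m)) = LinearMap.rTensor H e.symm.toLinearMap (N.ρ (e m))
  rw [compat, ← LinearMap.rTensor_comp_apply, e.symm_apply_apply, LinearEquiv.symm_comp,
    LinearMap.rTensor_id, LinearMap.id_apply]

lemma ComodIso.trans {L M N : Comod K H} (hLM : ComodIso K H L M) (hMN : ComodIso K H M N) :
    ComodIso K H L N := by
  obtain ⟨f, hf⟩ := hLM
  obtain ⟨g, hg⟩ := hMN
  refine ⟨⟨g.toLin ∘ₗ f.toLin, fun l => ?_⟩, hg.comp hf⟩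
  rw [LinearMap.comp_apply, g.compat, f.compat, LinearMap.rTensor_comp, LinearMap.comp_apply]

theorem DiscreteCorepType.exists_ne_comodIso (hdiscrete : DiscreteCorepType K H) {T : Type*}
    [Infinite T] (M : T → Comod K H) (hindec : ∀ t, (M t).Indec K H) {d : H → ℕ}
    (hd : ∀ t, HasDimVector K H (M t) d) : ∃ s t, s ≠ t ∧ ComodIso K H (M s) (M t) := by
  obtain ⟨_, R, hR⟩ := hdiscrete d
  choose index hindex using fun t => hR (M t) (hindec t) (hd t)
  obtain ⟨s, t, hst, heq⟩ := Finite.exists_ne_map_eq_of_infinite index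
  exact ⟨s, t, hst, (hindex s).trans (heq ▸ (hindex t).symm)⟩

end ComodIso

section DimVector

variable {K : Type} [CommRing K] {H : Type} [AddCommGroup H] [Module K H] [Coalgebra K H]

lemma Comod.isSubcomod_flag {M : Comod K H} {k : ℕ} (b : Module.Basis (Fin k) K M.carrier)
    (γ : Fin k → H)
    (htriangular : ∀ j, M.ρ (b j) - b j ⊗ₜ[K] γ j ∈
      LinearMap.range (LinearMap.rTensor H (b.flag j.castSucc).subtype)) (i : Fin (k + 1)) :
    IsSubcomod K H M (b.flag i) := by
  suffices b.flag i ≤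
      (LinearMap.range (LinearMap.rTensor H (b.flag i).subtype)).comap M.ρ from this
  refine b.flag_le_iff.2 fun j hj => ?_
  rw [Submodule.mem_comap, ← sub_add_cancel (M.ρ (b j)) (b j ⊗ₜ[K] γ j)]
  exact add_mem (range_rTensor_subtype_mono (b.flag_mono hj.le) (htriangular j))
    (tmul_mem_range_rTensor_subtype (b.self_mem_flag hj) _)

theorem Comod.hasDimVector_of_basis [Nontrivial K] {M : Comod K H} {k : ℕ}
    (b : Module.Basis (Fin k) K M.carrier) (γ : Fin k → H) (hγ : ∀ j, IsGrouplike K H (γ j))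
    (htriangular : ∀ j, M.ρ (b j) - b j ⊗ₜ[K] γ j ∈
      LinearMap.range (LinearMap.rTensor H (b.flag j.castSucc).subtype)) :
    HasDimVector K H M fun h => Nat.card {j // γ j = h} := by
  have hsub := Comod.isSubcomod_flag b γ htriangular
  refine ⟨k, b.flag, γ, b.flag_zero, b.flag_last, fun j => b.flag_mono (Fin.castSucc_le_succ j),
    hsub, hγ, fun j => ⟨b j, b.self_mem_flag (Fin.castSucc_lt_succ), ?_, ?_⟩, fun j => ?_,
    fun _ => rfl⟩
  · rw [b.self_mem_flag_iff]
    exact lt_irrefl _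
  · rw [b.flag_succ, sup_comm]
  · let defect : M.carrier →ₗ[K] M.carrier ⊗[K] H :=
      M.ρ - (TensorProduct.mk K M.carrier H).flip (γ j)
    suffices b.flag j.succ ≤
        (LinearMap.range (LinearMap.rTensor H (b.flag j.castSucc).subtype)).comap defect from this
    rw [b.flag_succ, sup_le_iff, Submodule.span_singleton_le_iff_mem]
    exact ⟨htriangular j, fun m hm =>
      sub_mem (hsub _ m hm) (tmul_mem_range_rTensor_subtype hm _)⟩

end DimVector

section MatrixCoaction

variable {K : Type*} [CommRing K] {H : Type*} [AddCommGroup H] [Module K H]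
  {ι : Type*} [Fintype ι] [DecidableEq ι]

variable (K) in
/-- The linear map with coefficient matrix `c`, sending `e j` to `∑ i, e i ⊗ c i j`. -/
noncomputable def matrixCoaction (c : Matrix ι ι H) : (ι → K) →ₗ[K] (ι → K) ⊗[K] H :=
  Fintype.linearCombination K fun j => ∑ i, (Pi.single i 1 : ι → K) ⊗ₜ[K] c i j

lemma matrixCoaction_single (c : Matrix ι ι H) (j : ι) :
    matrixCoaction K c (Pi.single j 1) = ∑ i, (Pi.single i 1 : ι → K) ⊗ₜ[K] c i j := by
  rw [matrixCoaction, Fintype.linearCombination_apply_single, one_smul]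

/-- Coefficientwise form of the equation `c' * A = A * c`. -/
def Intertwines (A : Matrix ι ι K) (c c' : Matrix ι ι H) : Prop :=
  ∀ l j, ∑ i, A i j • c' l i = ∑ i, A l i • c i j

lemma intertwines_toMatrixAlgEquiv' {c c' : Matrix ι ι H} {f : (ι → K) →ₗ[K] (ι → K)}
    (hf : ∀ m, matrixCoaction K c' (f m) = LinearMap.rTensor H f (matrixCoaction K c m)) :
    Intertwines (LinearMap.toMatrixAlgEquiv' f) c c' := by
  intro l j
  have hcoord := congrArg (TensorProduct.lid K H ∘ LinearMap.rTensor H (LinearMap.proj l))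
    (hf (Pi.single j 1))
  rw [matrixCoaction_single, matrixCoaction, Fintype.linearCombination_apply] at hcoord
  simpa [LinearMap.toMatrixAlgEquiv'_apply, Pi.single_apply] using hcoord

end MatrixCoaction

section MatrixComodule

variable {K : Type} [CommRing K] {H : Type} [AddCommGroup H] [Module K H] [Coalgebra K H]
  {ι : Type} [Fintype ι] [DecidableEq ι]

variable (K) in
/-- A multiplicative matrix over a coalgebra: the coefficient matrix of a coaction on a free
module, with columns indexing the basis vectors to which the coaction is applied. -/
structure IsMultiplicativeMatrix (c : Matrix ι ι H) : Prop where
  counit : ∀ i j, Coalgebra.counit (R := K) (c i j) = (1 : Matrix ι ι K) i j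
  comul : ∀ i j, Coalgebra.comul (R := K) (c i j) = ∑ l, c i l ⊗ₜ[K] c l j

/-- The comodule structure on `ι → K` defined by a multiplicative matrix. -/
noncomputable def matrixComod (c : Matrix ι ι H) (hc : IsMultiplicativeMatrix K c) :
    Comod K H where
  carrier := ι → K
  ρ := matrixCoaction K c
  counit_comp := by
    refine LinearMap.congr_fun (f := (TensorProduct.rid K (ι → K)).toLinearMap ∘ₗ
      LinearMap.lTensor (ι → K) (Coalgebra.counit (R := K) (A := H)) ∘ₗ matrixCoaction K c)
      (g := LinearMap.id) (LinearMap.pi_ext' fun j => LinearMap.ext_ring ?_)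
    simp [matrixCoaction_single, hc.counit, Matrix.one_apply]
  coassoc := by
    refine LinearMap.congr_fun
      (f := LinearMap.lTensor (ι → K) (Coalgebra.comul (R := K) (A := H)) ∘ₗ
        matrixCoaction K c)
      (g := (TensorProduct.assoc K (ι → K) H H).toLinearMap ∘ₗ
        LinearMap.rTensor H (matrixCoaction K c) ∘ₗ matrixCoaction K c)
      (LinearMap.pi_ext' fun j => LinearMap.ext_ring ?_)
    simp only [LinearMap.comp_apply, LinearMap.coe_single, LinearEquiv.coe_coe,
      matrixCoaction_single, map_sum, LinearMap.lTensor_tmul, LinearMap.rTensor_tmul, hc.comul,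
      TensorProduct.tmul_sum, TensorProduct.sum_tmul, TensorProduct.assoc_tmul]
    exact Finset.sum_comm

theorem matrixComod_hasDimVector [Nontrivial K] {c : Matrix ι ι H}
    (hc : IsMultiplicativeMatrix K c) {k : ℕ} (e : ι ≃ Fin k)
    (hdiag : ∀ i, IsGrouplike K H (c i i)) (hupper : ∀ i j, e j < e i → c i j = 0) :
    HasDimVector K H (matrixComod c hc)
      fun h => Nat.card {j : Fin k // c (e.symm j) (e.symm j) = h} := by
  let b : Module.Basis (Fin k) K (ι → K) := (Pi.basisFun K ι).reindex e
  have b_apply (i : ι) : b (e i) = Pi.single i 1 := by simp [b]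
  have htriangular (j : ι) : matrixCoaction K c (b (e j)) - b (e j) ⊗ₜ[K] c j j ∈
      LinearMap.range (LinearMap.rTensor H (b.flag (e j).castSucc).subtype) := by
    rw [b_apply, matrixCoaction_single, ← Finset.add_sum_erase _ _ (Finset.mem_univ j),
      add_sub_cancel_left]
    refine sum_mem fun i hi => ?_
    rcases lt_trichotomy (e i) (e j) with hij | hij | hji
    · rw [← b_apply]
      exact tmul_mem_range_rTensor_subtype (b.self_mem_flag (Fin.castSucc_lt_castSucc_iff.2 hij)) _
    · exact absurd (e.injective hij) (Finset.ne_of_mem_erase hi)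
    · rw [hupper i j hji, TensorProduct.tmul_zero]
      exact zero_mem _
  refine Comod.hasDimVector_of_basis (M := matrixComod c hc) b _ (fun j => hdiag _) fun j => ?_
  have := htriangular (e.symm j)
  rwa [e.apply_symm_apply] at this

lemma ComodHom.intertwines {c c' : Matrix ι ι H} {hc : IsMultiplicativeMatrix K c}
    {hc' : IsMultiplicativeMatrix K c'} (f : ComodHom K H (matrixComod c hc) (matrixComod c' hc')) :
    Intertwines (LinearMap.toMatrixAlgEquiv' (n := ι) f.toLin) c c' :=
  intertwines_toMatrixAlgEquiv' f.compat

end MatrixComodule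

section SkewPrimitive

variable {K : Type} [CommRing K] {H : Type} [AddCommGroup H] [Module K H] [Coalgebra K H]

lemma counit_smul_add_of_mem_skewPrim {g h x : H} (hx : x ∈ skewPrim K H g h) :
    Coalgebra.counit (R := K) g • x + Coalgebra.counit (R := K) x • h = x := by
  have hcounit := Coalgebra.rTensor_counit_comul (R := K) x
  rw [(mem_skewPrim K H).1 hx] at hcounit
  simpa using congrArg (TensorProduct.lid K H) hcounit

lemma smul_add_counit_smul_of_mem_skewPrim {g h x : H} (hx : x ∈ skewPrim K H g h) :
    Coalgebra.counit (R := K) x • g + Coalgebra.counit (R := K) h • x = x := by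
  have hcounit := Coalgebra.lTensor_counit_comul (R := K) x
  rw [(mem_skewPrim K H).1 hx] at hcounit
  simpa using congrArg (TensorProduct.rid K H) hcounit

lemma assoc_comul_sub_tmul_of_mem_skewPrim {g h x : H} (hx : x ∈ skewPrim K H g h) :
    TensorProduct.assoc K H H H ((Coalgebra.comul (R := K) g - g ⊗ₜ[K] g) ⊗ₜ[K] x) =
      x ⊗ₜ[K] (Coalgebra.comul (R := K) h - h ⊗ₜ[K] h) := by
  have hcoassoc := Coalgebra.coassoc_apply (R := K) x
  simp only [(mem_skewPrim K H).1 hx, map_add, LinearMap.rTensor_tmul, LinearMap.lTensor_tmul,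
    TensorProduct.add_tmul, TensorProduct.tmul_add, TensorProduct.assoc_tmul] at hcoassoc
  rw [TensorProduct.sub_tmul, TensorProduct.tmul_sub, map_sub, TensorProduct.assoc_tmul,
    ← sub_eq_zero, ← sub_eq_zero.2 hcoassoc]
  abel

lemma counit_eq_zero_of_mem_skewPrim {g h x : H} (hg : Coalgebra.counit (R := K) g = 1)
    (hh : Coalgebra.counit (R := K) h = 1) (hx : x ∈ skewPrim K H g h) :
    Coalgebra.counit (R := K) x = 0 := by
  have hcounit := congrArg (Coalgebra.counit (R := K)) (counit_smul_add_of_mem_skewPrim hx)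
  simpa [hg, hh] using hcounit

end SkewPrimitive

section TwoStepMatrix

variable {H : Type*} [Zero H] {ι κ : Type*} [DecidableEq ι] [DecidableEq κ]

/-- The coefficient matrix of an extension of a direct sum of one-dimensional comodules `g k` by
a direct sum of one-dimensional comodules `h i`, with extension data `x i k`. -/
def twoStepMatrix (h : ι → H) (g : κ → H) (x : Matrix ι κ H) : Matrix (ι ⊕ κ) (ι ⊕ κ) H :=
  Matrix.fromBlocks (Matrix.diagonal h) x 0 (Matrix.diagonal g)

lemma twoStepMatrix_diag (h : ι → H) (g : κ → H) (x : Matrix ι κ H) (i : ι ⊕ κ) :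
    twoStepMatrix h g x i i = Sum.elim h g i := by
  cases i <;> simp [twoStepMatrix]

end TwoStepMatrix

lemma isMultiplicativeMatrix_twoStepMatrix {K : Type} [CommRing K] {H : Type} [AddCommGroup H]
    [Module K H] [Coalgebra K H] {ι κ : Type} [DecidableEq ι] [DecidableEq κ] [Fintype ι]
    [Fintype κ] {h : ι → H} {g : κ → H} (hh : ∀ i, IsGrouplike K H (h i))
    (hg : ∀ k, IsGrouplike K H (g k)) {x : Matrix ι κ H}
    (hx : ∀ i k, x i k ∈ skewPrim K H (h i) (g k)) :
    IsMultiplicativeMatrix K (twoStepMatrix h g x) where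
  counit := by
    rintro (i | k) (j | l)
    · obtain rfl | hij := eq_or_ne i j <;> simp [twoStepMatrix, (hh _).1, *]
    · simpa [twoStepMatrix] using
        counit_eq_zero_of_mem_skewPrim (hh i).1 (hg l).1 (hx i l)
    · simp [twoStepMatrix]
    · obtain rfl | hkl := eq_or_ne k l <;> simp [twoStepMatrix, (hg _).1, *]
  comul := by
    rintro (i | k) (j | l)
    · obtain rfl | hij := eq_or_ne i j <;>
        simp [twoStepMatrix, Matrix.diagonal_apply, TensorProduct.ite_tmul, (hh _).2, *]
    · simp [twoStepMatrix, Matrix.diagonal_apply, TensorProduct.ite_tmul, TensorProduct.tmul_ite,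
        (mem_skewPrim K H).1 (hx i l)]
    · simp [twoStepMatrix, Matrix.diagonal_apply]
    · obtain rfl | hkl := eq_or_ne k l <;>
        simp [twoStepMatrix, Matrix.diagonal_apply, TensorProduct.ite_tmul, (hg _).2, *]

section TwoStepRigidity

variable {K : Type*} [Field K] {H : Type*} [AddCommGroup H] [Module K H]
  {ι κ : Type*} [DecidableEq ι] [DecidableEq κ] [Fintype ι] [Fintype κ]

lemma Intertwines.toBlocks₂₁_eq_zero {h : ι → H} {g : κ → H} (hg : Function.Injective g)
    {x x' : Matrix ι κ H} (hcol : ∀ k, ∃ i, x' i k ∉ Submodule.span K {h i - g k})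
    {A : Matrix (ι ⊕ κ) (ι ⊕ κ) K}
    (hA : Intertwines A (twoStepMatrix h g x) (twoStepMatrix h g x')) : A.toBlocks₂₁ = 0 := by
  ext k j
  change A (.inr k) (.inl j) = 0
  have hmem (l : κ) : A (.inr l) (.inl j) • g l = A (.inr l) (.inl j) • h j := by
    simpa [twoStepMatrix, Matrix.diagonal_apply] using hA (.inr l) (.inl j)
  by_contra hk
  have hgk : g k = h j := smul_right_injective H hk (hmem k)
  have hother (l : κ) (hl : l ≠ k) : A (.inr l) (.inl j) = 0 := by
    by_contra hl'
    exact hl (hg ((smul_right_injective H hl' (hmem l)).trans hgk.symm))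
  obtain ⟨i, hi⟩ := hcol k
  have hrow : A (.inl i) (.inl j) • h i + A (.inr k) (.inl j) • x' i k =
      A (.inl i) (.inl j) • h j := by
    have hsum : ∑ l, A (.inr l) (.inl j) • x' i l = A (.inr k) (.inl j) • x' i k :=
      Fintype.sum_eq_single k fun l hl => by rw [hother l hl, zero_smul]
    rw [← hsum]
    simpa [twoStepMatrix, Matrix.diagonal_apply] using hA (.inl i) (.inl j)
  refine hi ((Submodule.smul_mem_iff _ hk).1 (Submodule.mem_span_singleton.2
    ⟨-A (.inl i) (.inl j), ?_⟩))
  rw [hgk, neg_smul, smul_sub, neg_sub, ← hrow, add_sub_cancel_left]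

theorem Intertwines.eq_fromBlocks_diagonal {h : ι → H} (hh : Function.Injective h) {g : κ → H}
    (hg : Function.Injective g) {x x' : Matrix ι κ H}
    (hcol : ∀ k, ∃ i, x' i k ∉ Submodule.span K {h i - g k}) {A : Matrix (ι ⊕ κ) (ι ⊕ κ) K}
    (hA : Intertwines A (twoStepMatrix h g x) (twoStepMatrix h g x')) :
    ∃ (p : ι → K) (d : κ → K) (Q : Matrix ι κ K),
      A = Matrix.fromBlocks (Matrix.diagonal p) Q 0 (Matrix.diagonal d) ∧
        ∀ i k, d k • x' i k - p i • x i k ∈ Submodule.span K {h i - g k} := by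
  have hR := hA.toBlocks₂₁_eq_zero hg hcol
  have hR' (k : κ) (i : ι) : A (.inr k) (.inl i) = 0 := congrFun₂ hR k i
  have hP : A.toBlocks₁₁.IsDiag := by
    refine fun i j hij => by_contra fun hne => hij (hh (smul_right_injective H hne ?_))
    simpa [twoStepMatrix, Matrix.diagonal_apply, hR', Matrix.toBlocks₁₁] using hA (.inl i) (.inl j)
  have hD : A.toBlocks₂₂.IsDiag := by
    refine fun k l hkl => by_contra fun hne => hkl (hg (smul_right_injective H hne ?_))
    simpa [twoStepMatrix, Matrix.diagonal_apply, hR', Matrix.toBlocks₂₂] using hA (.inr k) (.inr l)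
  have hA_blocks : A = Matrix.fromBlocks (Matrix.diagonal A.toBlocks₁₁.diag) A.toBlocks₁₂ 0
      (Matrix.diagonal A.toBlocks₂₂.diag) := by
    rw [hP.diagonal_diag, hD.diagonal_diag, ← hR, Matrix.fromBlocks_toBlocks]
  refine ⟨_, _, _, hA_blocks, fun i k => Submodule.mem_span_singleton.2
    ⟨-A.toBlocks₁₂ i k, ?_⟩⟩
  have hentry : A.toBlocks₁₂ i k • h i + A.toBlocks₂₂ k k • x' i k =
      A.toBlocks₁₁ i i • x i k + A.toBlocks₁₂ i k • g k := by
    rw [hA_blocks] at hA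
    simpa [twoStepMatrix, Matrix.diagonal_apply] using hA (.inl i) (.inr k)
  rw [Matrix.diag_apply, Matrix.diag_apply, neg_smul, smul_sub, neg_sub,
    sub_eq_sub_iff_add_eq_add, add_comm, ← hentry, add_comm]

end TwoStepRigidity

lemma eq_zero_or_one_of_isIdempotentElem_of_sub_smul_one_sq_eq_zero {K R : Type*} [Field K]
    [Ring R] [Algebra K R] {e : R} (he : IsIdempotentElem e) {α : K}
    (hα : (e - α • 1) ^ 2 = 0) : e = 0 ∨ e = 1 := by
  have he_mul : (1 - α) ^ 2 • e = 0 := by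
    rw [← mul_zero e, ← hα]
    simp only [sq, sub_mul, mul_sub, he.eq, smul_mul_assoc, mul_smul_comm, one_mul, mul_one]
    module
  rcases smul_eq_zero.1 he_mul with h1 | h0
  · right
    rw [← sub_eq_zero.1 (pow_eq_zero_iff two_ne_zero |>.1 h1), one_smul] at hα
    rw [← sub_eq_zero, ← neg_eq_zero, neg_sub, ← he.one_sub.eq, ← neg_sub, neg_mul_neg, ← sq, hα]
  · exact .inl h0

section SeparatedCycle

variable {K : Type} [Field K] {H : Type} [AddCommGroup H] [Module K H]

/-- The matrix of extension data supported on a cycle of `2 * (n + 1)` arrows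
`h j → g j ← h (j + 1)`, with weight `r j` on the arrow `X j` and `s j` on the arrow `Y j`. For
`n = 0` the two arrows are parallel and both contribute to the only entry. -/
def cycleMatrix {n : ℕ} (X Y : Fin (n + 1) → H) (r s : Fin (n + 1) → K) :
    Matrix (Fin (n + 1)) (Fin (n + 1)) H :=
  fun i j => (if i = j then r j • X j else 0) + if i = j + 1 then s j • Y j else 0

lemma smul_cycleMatrix_sub_smul_cycleMatrix {n : ℕ} (X Y : Fin (n + 1) → H)
    (p d r s r' s' : Fin (n + 1) → K) (i j : Fin (n + 1)) :
    d j • cycleMatrix X Y r' s' i j - p i • cycleMatrix X Y r s i j =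
      cycleMatrix X Y (fun j => d j * r' j - p j * r j) (fun j => d j * s' j - p (j + 1) * s j)
        i j := by
  rw [cycleMatrix, cycleMatrix, cycleMatrix, smul_add, smul_add, add_sub_add_comm]
  congr 1 <;> split_ifs with hij <;> simp only [hij, smul_zero, sub_zero, sub_smul, mul_smul]

/-- A cycle `h 0 → g 0 ← h 1 → g 1 ← ⋯ ← h 0` in the separated quiver of a coalgebra: the arrows
`X j : h j → g j` and `Y j : h (j + 1) → g j` are skew primitives whose combinations with nonzero
weights are nontrivial. For `n = 0` this is a pair of parallel arrows. -/
structure IsSeparatedCycle [Coalgebra K H] {n : ℕ} (h g X Y : Fin (n + 1) → H) : Prop where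
  grouplike_source : ∀ j, IsGrouplike K H (h j)
  grouplike_target : ∀ j, IsGrouplike K H (g j)
  injective_source : Function.Injective h
  injective_target : Function.Injective g
  mem_skewPrim_left : ∀ j, X j ∈ skewPrim K H (h j) (g j)
  mem_skewPrim_right : ∀ j, Y j ∈ skewPrim K H (h (j + 1)) (g j)
  nontrivial : ∀ (r s : Fin (n + 1) → K) (i j : Fin (n + 1)),
    cycleMatrix X Y r s i j ∈ Submodule.span K {h i - g j} →
      (i = j → r j = 0) ∧ (i = j + 1 → s j = 0)

namespace IsSeparatedCycle

variable [Coalgebra K H] {n : ℕ} {h g X Y : Fin (n + 1) → H}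

lemma cycleMatrix_mem_skewPrim (hcycle : IsSeparatedCycle (K := K) h g X Y)
    (r s : Fin (n + 1) → K) (i j : Fin (n + 1)) :
    cycleMatrix X Y r s i j ∈ skewPrim K H (h i) (g j) := by
  refine add_mem ?_ ?_ <;> split_ifs with hij
  · subst hij
    exact Submodule.smul_mem _ _ (hcycle.mem_skewPrim_left i)
  · exact zero_mem _
  · subst hij
    exact Submodule.smul_mem _ _ (hcycle.mem_skewPrim_right j)
  · exact zero_mem _

/-- The coefficient matrix of the band comodule with parameter `t`: all arrows of the cycle act
with weight `1`, except for the last one which acts with weight `t`. -/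
def bandMatrix {n : ℕ} (h g X Y : Fin (n + 1) → H) (t : K) :
    Matrix (Fin (n + 1) ⊕ Fin (n + 1)) (Fin (n + 1) ⊕ Fin (n + 1)) H :=
  twoStepMatrix h g (cycleMatrix X Y 1 (Pi.mulSingle (Fin.last n) t))

lemma isMultiplicativeMatrix_bandMatrix (hcycle : IsSeparatedCycle (K := K) h g X Y) (t : K) :
    IsMultiplicativeMatrix K (bandMatrix h g X Y t) :=
  isMultiplicativeMatrix_twoStepMatrix hcycle.grouplike_source hcycle.grouplike_target
    (hcycle.cycleMatrix_mem_skewPrim _ _)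

/-- The band comodule with parameter `t` attached to a cycle in the separated quiver. -/
noncomputable def bandComod (hcycle : IsSeparatedCycle (K := K) h g X Y) (t : K) : Comod K H :=
  matrixComod _ (hcycle.isMultiplicativeMatrix_bandMatrix t)

theorem hasDimVector_bandComod (hcycle : IsSeparatedCycle (K := K) h g X Y) (t : K) :
    HasDimVector K H (hcycle.bandComod t)
      fun x => Nat.card {j // Sum.elim h g (finSumFinEquiv.symm j) = x} := by
  have hdiag (i : Fin (n + 1) ⊕ Fin (n + 1)) : bandMatrix h g X Y t i i = Sum.elim h g i :=
    twoStepMatrix_diag _ _ _ i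
  simp only [← hdiag]
  refine matrixComod_hasDimVector (hcycle.isMultiplicativeMatrix_bandMatrix t) _ ?_ ?_
  · rintro (i | i) <;> rw [hdiag]
    exacts [hcycle.grouplike_source i, hcycle.grouplike_target i]
  · rintro (i | i) (j | j) hij
    · exact Matrix.diagonal_apply_ne _ (by rintro rfl; exact lt_irrefl _ hij)
    · simp only [finSumFinEquiv_apply_left, finSumFinEquiv_apply_right, Fin.lt_def,
        Fin.val_natAdd, Fin.val_castAdd] at hij
      omega
    · rfl
    · exact Matrix.diagonal_apply_ne _ (by rintro rfl; exact lt_irrefl _ hij)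

theorem exists_sub_smul_one_sq_eq_zero (hcycle : IsSeparatedCycle (K := K) h g X Y) {s t : K}
    {A : Matrix (Fin (n + 1) ⊕ Fin (n + 1)) (Fin (n + 1) ⊕ Fin (n + 1)) K}
    (hA : Intertwines A (bandMatrix h g X Y s) (bandMatrix h g X Y t)) :
    ∃ α : K, (A - α • 1) ^ 2 = 0 ∧ α * t = α * s := by
  have hcol (j : Fin (n + 1)) : ∃ i, cycleMatrix X Y 1 (Pi.mulSingle (Fin.last n) t) i j ∉
      Submodule.span K {h i - g j} :=
    ⟨j, fun hj => one_ne_zero ((hcycle.nontrivial _ _ _ _ hj).1 rfl)⟩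
  obtain ⟨p, d, Q, hblocks, hmem⟩ :=
    hA.eq_fromBlocks_diagonal hcycle.injective_source hcycle.injective_target hcol
  simp only [smul_cycleMatrix_sub_smul_cycleMatrix] at hmem
  have hdp : d = p := funext fun j =>
    sub_eq_zero.1 (by simpa using (hcycle.nontrivial _ _ _ _ (hmem j j)).1 rfl)
  have hstep (j : Fin (n + 1)) : p j * (Pi.mulSingle (Fin.last n) t : Fin (n + 1) → K) j =
      p (j + 1) * (Pi.mulSingle (Fin.last n) s : Fin (n + 1) → K) j :=
    sub_eq_zero.1 (hdp ▸ (hcycle.nontrivial _ _ _ _ (hmem (j + 1) j)).2 rfl)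
  have hconst (j : Fin (n + 1)) : p j = p 0 := by
    induction j using Fin.induction with
    | zero => rfl
    | succ j ih =>
      have := hstep j.castSucc
      rw [Pi.mulSingle_eq_of_ne (Fin.castSucc_lt_last j).ne,
        Pi.mulSingle_eq_of_ne (Fin.castSucc_lt_last j).ne, Fin.coeSucc_eq_succ] at this
      simpa [ih] using this.symm
  refine ⟨p 0, ?_, by simpa [hconst (Fin.last n)] using hstep (Fin.last n)⟩
  rw [hblocks, hdp, funext hconst, ← Matrix.smul_one_eq_diagonal, ← Matrix.fromBlocks_one,
    Matrix.fromBlocks_smul, sub_eq_add_neg, Matrix.fromBlocks_neg, Matrix.fromBlocks_add, sq,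
    Matrix.fromBlocks_multiply]
  simp

lemma exists_end_sub_smul_one_sq_eq_zero (hcycle : IsSeparatedCycle (K := K) h g X Y) {s t : K}
    {f : Module.End K (Fin (n + 1) ⊕ Fin (n + 1) → K)}
    (hf : Intertwines (LinearMap.toMatrixAlgEquiv' f) (bandMatrix h g X Y s)
      (bandMatrix h g X Y t)) :
    ∃ α : K, (f - α • 1) ^ 2 = 0 ∧ α * t = α * s := by
  obtain ⟨α, hsq, hα⟩ := hcycle.exists_sub_smul_one_sq_eq_zero hf
  exact ⟨α, LinearMap.toMatrixAlgEquiv'.injective (by simpa using hsq), hα⟩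

lemma indec_bandComod (hcycle : IsSeparatedCycle (K := K) h g X Y) (t : K) :
    (hcycle.bandComod t).Indec K H := by
  refine ⟨exists_ne (0 : Fin (n + 1) ⊕ Fin (n + 1) → K), fun f hf => ?_⟩
  obtain ⟨α, hsq, -⟩ := hcycle.exists_end_sub_smul_one_sq_eq_zero f.intertwines
  exact eq_zero_or_one_of_isIdempotentElem_of_sub_smul_one_sq_eq_zero hf hsq

lemma eq_of_intertwines_of_injective (hcycle : IsSeparatedCycle (K := K) h g X Y) {s t : K}
    {f : Module.End K (Fin (n + 1) ⊕ Fin (n + 1) → K)}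
    (hf : Intertwines (LinearMap.toMatrixAlgEquiv' f) (bandMatrix h g X Y s)
      (bandMatrix h g X Y t)) (hinj : Function.Injective f) : s = t := by
  obtain ⟨α, hsq, hα⟩ := hcycle.exists_end_sub_smul_one_sq_eq_zero hf
  refine (mul_left_cancel₀ (fun hα0 => ?_) hα).symm
  rw [hα0, zero_smul, sub_zero, sq] at hsq
  obtain ⟨v, hv⟩ := exists_ne (0 : Fin (n + 1) ⊕ Fin (n + 1) → K)
  exact hv (hinj.comp hinj ((LinearMap.congr_fun hsq v).trans (map_zero (f * f)).symm))

lemma eq_of_comodIso_bandComod (hcycle : IsSeparatedCycle (K := K) h g X Y) {s t : K}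
    (hst : ComodIso K H (hcycle.bandComod s) (hcycle.bandComod t)) : s = t := by
  obtain ⟨f, hf⟩ := hst
  exact hcycle.eq_of_intertwines_of_injective f.intertwines hf.injective

end IsSeparatedCycle

theorem DiscreteCorepType.not_isSeparatedCycle [Coalgebra K H] [Infinite K]
    (hdiscrete : DiscreteCorepType K H) {n : ℕ} (h g X Y : Fin (n + 1) → H) :
    ¬ IsSeparatedCycle (K := K) h g X Y := by
  intro hcycle
  obtain ⟨s, t, hne, hiso⟩ := hdiscrete.exists_ne_comodIso hcycle.bandComod hcycle.indec_bandComod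
    hcycle.hasDimVector_bandComod
  exact hne (hcycle.eq_of_comodIso_bandComod hiso)

end SeparatedCycle

section VectorSpace

variable {K : Type*} [Field K] {V : Type*} [AddCommGroup V] [Module K V]

lemma rank_span_singleton_eq_ite (v : V) :
    Module.rank K (Submodule.span K {v}) = if v = 0 then 0 else 1 := by
  split_ifs with hv
  · rw [hv, Submodule.span_zero_singleton, rank_bot]
  · exact (rank_submodule_eq_one_iff _).2
      ⟨v, Submodule.mem_span_singleton_self v, hv, le_rfl⟩

lemma rank_sup_span_singleton {N : Submodule K V} {v : V} (hv : v ∉ N) :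
    Module.rank K (N ⊔ Submodule.span K {v} : Submodule K V) = Module.rank K N + 1 := by
  have hv0 : v ≠ 0 := fun hv0 => hv (hv0 ▸ zero_mem N)
  have hrank := Submodule.rank_sup_add_rank_inf_eq N (Submodule.span K {v})
  rwa [((Submodule.disjoint_span_singleton' hv0).2 hv).eq_bot, rank_bot, add_zero,
    rank_span_singleton_eq_ite, if_neg hv0] at hrank

lemma eq_zero_of_tmul_eq_zero {W : Type*} [AddCommGroup W] [Module K W] {v : V} (hv : v ≠ 0)
    {w : W} (hvw : v ⊗ₜ[K] w = 0) : w = 0 := by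
  obtain ⟨f, hf⟩ : ∃ f : Module.Dual K V, f v ≠ 0 := by
    simpa using (Module.forall_dual_apply_eq_zero_iff K v).not.2 hv
  have hfw := congrArg (TensorProduct.lid K W ∘ LinearMap.rTensor W f) hvw
  exact (smul_eq_zero.1 (by simpa using hfw)).resolve_left hf

end VectorSpace

section HasArrow

variable {K : Type} [Field K] {H : Type} [AddCommGroup H] [Module K H] [Coalgebra K H]

variable (K) in
/-- There is an arrow from `g` to `h` in the Ext-quiver, i.e. a nontrivial `(g, h)`-skew
primitive. -/
def HasArrow (g h : H) : Prop := ¬ skewPrim K H g h ≤ Submodule.span K {g - h}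

lemma hasArrow_iff {g h : H} :
    HasArrow K g h ↔ ∃ x ∈ skewPrim K H g h, x ∉ Submodule.span K {g - h} :=
  SetLike.not_le_iff_exists

lemma sub_mem_skewPrim {g h : H} (hg : IsGrouplike K H g) (hh : IsGrouplike K H h) :
    g - h ∈ skewPrim K H g h := by
  rw [mem_skewPrim, map_sub, hg.2, hh.2, TensorProduct.tmul_sub, TensorProduct.sub_tmul,
    sub_add_sub_cancel]

lemma counit_eq_zero_of_counit_left_eq_one {g h x : H} (hg : Coalgebra.counit (R := K) g = 1)
    (hx : x ∈ skewPrim K H g h) (hnt : x ∉ Submodule.span K {g - h}) :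
    Coalgebra.counit (R := K) x = 0 := by
  by_contra hεx
  have hh : h = 0 := by
    simpa [hg, hεx] using counit_smul_add_of_mem_skewPrim hx
  have hxg := smul_add_counit_smul_of_mem_skewPrim hx
  rw [hh, map_zero, zero_smul, add_zero] at hxg
  exact hnt (Submodule.mem_span_singleton.2 ⟨_, by rw [hh, sub_zero, hxg]⟩)

lemma counit_eq_zero_of_counit_right_eq_one {g h x : H} (hh : Coalgebra.counit (R := K) h = 1)
    (hx : x ∈ skewPrim K H g h) (hnt : x ∉ Submodule.span K {g - h}) :
    Coalgebra.counit (R := K) x = 0 := by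
  by_contra hεx
  have hg : g = 0 := by
    simpa [hh, hεx] using smul_add_counit_smul_of_mem_skewPrim hx
  have hxh := counit_smul_add_of_mem_skewPrim hx
  rw [hg, map_zero, zero_smul, zero_add] at hxh
  exact hnt (Submodule.mem_span_singleton.2 ⟨-Coalgebra.counit (R := K) x, by
    rw [hg, zero_sub, neg_smul_neg, hxh]⟩)

theorem isGrouplike_iff_of_mem_skewPrim {g h x : H} (hx : x ∈ skewPrim K H g h)
    (hnt : x ∉ Submodule.span K {g - h}) : IsGrouplike K H g ↔ IsGrouplike K H h := by
  have hx0 : x ≠ 0 := fun hx0 => hnt (hx0 ▸ zero_mem _)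
  have hassoc := assoc_comul_sub_tmul_of_mem_skewPrim hx
  constructor
  · intro hg
    have hεx := counit_eq_zero_of_counit_left_eq_one hg.1 hx hnt
    refine ⟨?_, sub_eq_zero.1 ?_⟩
    · have := smul_add_counit_smul_of_mem_skewPrim hx
      rw [hεx, zero_smul, zero_add] at this
      exact smul_left_injective K hx0 (this.trans (one_smul K x).symm)
    · rw [hg.2, sub_self, zero_tmul, map_zero] at hassoc
      exact eq_zero_of_tmul_eq_zero hx0 hassoc.symm
  · intro hh
    have hεx := counit_eq_zero_of_counit_right_eq_one hh.1 hx hnt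
    refine ⟨?_, sub_eq_zero.1 ?_⟩
    · have := counit_smul_add_of_mem_skewPrim hx
      rw [hεx, zero_smul, add_zero] at this
      exact smul_left_injective K hx0 (this.trans (one_smul K x).symm)
    · rw [hh.2, sub_self, tmul_zero, LinearEquiv.map_eq_zero_iff] at hassoc
      refine eq_zero_of_tmul_eq_zero (K := K) hx0 ?_
      rw [← TensorProduct.comm_tmul, hassoc, map_zero]

end HasArrow

section DiscreteQuiver

variable {K : Type} [Field K] [Infinite K] {H : Type} [AddCommGroup H] [Module K H]
  [Coalgebra K H]

lemma DiscreteCorepType.mem_span_sup_span (hdiscrete : DiscreteCorepType K H) {g h x y : H}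
    (hg : IsGrouplike K H g) (hh : IsGrouplike K H h) (hx : x ∈ skewPrim K H g h)
    (hnt : x ∉ Submodule.span K {g - h}) (hy : y ∈ skewPrim K H g h) :
    y ∈ Submodule.span K {g - h} ⊔ Submodule.span K {x} := by
  by_contra hy_notMem
  refine hdiscrete.not_isSeparatedCycle (n := 0) (fun _ => g) (fun _ => h) (fun _ => x)
    (fun _ => y) ⟨fun _ => hg, fun _ => hh, Function.injective_of_subsingleton (α := Fin 1) _,
      Function.injective_of_subsingleton (α := Fin 1) _, fun _ => hx, fun _ => hy,
      fun r s i j hmem => ?_⟩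
  obtain rfl := Subsingleton.elim (α := Fin 1) i j
  have hmem' : r i • x + s i • y ∈ Submodule.span K {g - h} := by
    simpa [cycleMatrix] using hmem
  have hs : s i = 0 := by
    by_contra hs
    refine hy_notMem ((Submodule.smul_mem_iff _ hs).1 ?_)
    rw [← add_sub_cancel_left (r i • x) (s i • y)]
    exact sub_mem (Submodule.mem_sup_left hmem')
      (Submodule.mem_sup_right (Submodule.smul_mem _ _ (Submodule.mem_span_singleton_self x)))
  refine ⟨fun _ => ?_, fun _ => hs⟩
  by_contra hr
  exact hnt ((Submodule.smul_mem_iff _ hr).1 (by simpa [hs] using hmem'))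

theorem DiscreteCorepType.rank_skewPrim (hdiscrete : DiscreteCorepType K H) {g h : H}
    (hg : IsGrouplike K H g) (hh : IsGrouplike K H h) :
    Module.rank K (skewPrim K H g h) =
      (if g = h then 0 else 1) + if HasArrow K g h then 1 else 0 := by
  have hspan_le : Submodule.span K {g - h} ≤ skewPrim K H g h :=
    (Submodule.span_singleton_le_iff_mem _ _).2 (sub_mem_skewPrim hg hh)
  have hrank_span : Module.rank K (Submodule.span K {g - h}) = if g = h then 0 else 1 := by
    simp only [rank_span_singleton_eq_ite, sub_eq_zero]
  rw [← hrank_span]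
  by_cases harrow : HasArrow K g h
  · obtain ⟨x, hx, hnt⟩ := hasArrow_iff.1 harrow
    have hsup : skewPrim K H g h = Submodule.span K {g - h} ⊔ Submodule.span K {x} :=
      le_antisymm (fun y hy => hdiscrete.mem_span_sup_span hg hh hx hnt hy)
        (sup_le hspan_le ((Submodule.span_singleton_le_iff_mem _ _).2 hx))
    rw [if_pos harrow, hsup, rank_sup_span_singleton hnt]
  · rw [if_neg harrow, add_zero, le_antisymm (not_not.1 harrow) hspan_le]

theorem DiscreteCorepType.not_hasArrow_cycle (hdiscrete : DiscreteCorepType K H) {n : ℕ}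
    {h g : Fin (n + 2) → H} (hh : ∀ j, IsGrouplike K H (h j)) (hg : ∀ j, IsGrouplike K H (g j))
    (hh_inj : Function.Injective h) (hg_inj : Function.Injective g)
    (hleft : ∀ j, HasArrow K (h j) (g j)) (hright : ∀ j, HasArrow K (h (j + 1)) (g j)) :
    False := by
  simp only [hasArrow_iff] at hleft hright
  choose X hX hXnt using hleft
  choose Y hY hYnt using hright
  refine hdiscrete.not_isSeparatedCycle h g X Y ⟨hh, hg, hh_inj, hg_inj, hX, hY,
    fun r s i j hmem => ⟨?_, ?_⟩⟩
  · rintro rfl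
    by_contra hr
    refine hXnt i ((Submodule.smul_mem_iff _ hr).1 ?_)
    simpa [cycleMatrix] using hmem
  · rintro rfl
    by_contra hs
    refine hYnt j ((Submodule.smul_mem_iff _ hs).1 ?_)
    simpa [cycleMatrix] using hmem

end DiscreteQuiver

section SeparatedCycleFree

variable {G : Type*} [Group G]

/-- The directed Cayley graph of `G` with label set `S`, having the arrows `u → u * c` for
`c ∈ S`, contains no zigzag cycle `h 0 → g 0 ← h 1 → g 1 ← ⋯ ← h 0` with at least four arrows
in which the sources `h j` are distinct and the targets `g j` are distinct; that is, its separated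
quiver has no cycle. -/
def IsSeparatedCycleFree (S : Set G) : Prop :=
  ∀ (n : ℕ) (h g : Fin (n + 2) → G), Function.Injective h → Function.Injective g →
    (∀ j, (h j)⁻¹ * g j ∈ S) → ¬ ∀ j, (h (j + 1))⁻¹ * g j ∈ S

lemma injective_vec_three {α : Type*} {x y z : α} (hxy : x ≠ y) (hxz : x ≠ z) (hyz : y ≠ z) :
    Function.Injective ![x, y, z] := by
  intro i j
  fin_cases i <;> fin_cases j <;> simp [hxy, hxz, hyz, hxy.symm, hxz.symm, hyz.symm]

namespace IsSeparatedCycleFree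

variable {S : Set G} {a b c : G}

theorem orderOf_mul_inv_eq_zero (hS : IsSeparatedCycleFree S) (ha : a ∈ S) (hb : b ∈ S)
    (hab : a ≠ b) : orderOf (a * b⁻¹) = 0 := by
  by_contra hfin
  have hne_one : orderOf (a * b⁻¹) ≠ 1 := by rwa [Ne, orderOf_eq_one_iff, mul_inv_eq_one]
  obtain ⟨n, hn⟩ : ∃ n, orderOf (a * b⁻¹) = n + 2 := ⟨orderOf (a * b⁻¹) - 2, by omega⟩
  have hlt (j : Fin (n + 2)) : (j : ℕ) < orderOf (a * b⁻¹) := j.isLt.trans_eq hn.symm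
  have hinj : Function.Injective fun j : Fin (n + 2) => (a * b⁻¹) ^ (j : ℕ) := fun i j hij =>
    Fin.ext (pow_injOn_Iio_orderOf (hlt i) (hlt j) hij)
  have hsucc (j : Fin (n + 2)) :
      (a * b⁻¹) ^ ((j + 1 : Fin (n + 2)) : ℕ) = (a * b⁻¹) ^ (j : ℕ) * (a * b⁻¹) := by
    have hmod := pow_mod_orderOf (a * b⁻¹) (j + 1)
    rwa [hn, pow_succ] at hmod
  refine hS n (fun j => (a * b⁻¹) ^ (j : ℕ)) (fun j => (a * b⁻¹) ^ (j : ℕ) * a) hinj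
    ((mul_left_injective a).comp hinj) (fun j => by simpa using ha) fun j => ?_
  rw [hsucc]
  convert hb using 1
  group

/-- If `c ≠ b * a * b⁻¹`, the six labels `a`, `b`, `c`, `a`, `a * b * a⁻¹` and
`(a * b⁻¹) * c * (a * b⁻¹)⁻¹` close up to a hexagon in the separated quiver. -/
theorem eq_conj_of_ne (hS : IsSeparatedCycleFree S) (hconj : ∀ u, ∀ c ∈ S, u * c * u⁻¹ ∈ S)
    (ha : a ∈ S) (hb : b ∈ S) (hc : c ∈ S) (hab : a ≠ b) (hac : a ≠ c) (hbc : b ≠ c) :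
    c = b * a * b⁻¹ := by
  by_contra hne
  have hh_inj : Function.Injective ![1, a * b⁻¹, a * b⁻¹ * c * a⁻¹] :=
    injective_vec_three
      (fun h => hab (eq_of_mul_inv_eq_one h.symm))
      (fun h => hbc (by
        simpa [mul_assoc, inv_mul_eq_iff_eq_mul, eq_comm] using mul_inv_eq_one.1 h.symm))
      (fun h => hac (by simpa [mul_assoc, mul_inv_eq_one, eq_comm] using h))
  have hg_inj : Function.Injective ![a, a * b⁻¹ * c, a * b⁻¹ * c * b * a⁻¹] :=
    injective_vec_three
      (fun h => hbc (by simpa [mul_assoc, inv_mul_eq_one] using h))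
      (fun h => hne (by
        rw [eq_mul_inv_iff_mul_eq, ← inv_mul_eq_iff_eq_mul, ← mul_inv_eq_one]
        simpa [mul_assoc] using h))
      (fun h => hab (by simpa [mul_assoc, mul_inv_eq_one, eq_comm] using h))
  refine hS 1 _ _ hh_inj hg_inj (fun j => ?_) fun j => ?_
  · fin_cases j
    · simpa using ha
    · simpa [mul_assoc] using hc
    · simpa [mul_assoc] using hconj a b hb
  · fin_cases j
    · simpa using hb
    · simpa [mul_assoc] using ha
    · simpa [mul_assoc] using hconj (a * b⁻¹) c hc

theorem not_three (hS : IsSeparatedCycleFree S) (hconj : ∀ u, ∀ c ∈ S, u * c * u⁻¹ ∈ S)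
    (ha : a ∈ S) (hb : b ∈ S) (hc : c ∈ S) (hab : a ≠ b) (hac : a ≠ c) (hbc : b ≠ c) : False := by
  have conj_sq {x y z : G} (hx : x ∈ S) (hy : y ∈ S) (hz : z ∈ S) (hxy : x ≠ y) (hxz : x ≠ z)
      (hyz : y ≠ z) : z * z = y * y := by
    have hz_conj : z = x * y * x⁻¹ := hS.eq_conj_of_ne hconj hy hx hz hxy.symm hyz hxz
    have hx_conj : x = y * (y * x * y⁻¹) * y⁻¹ := by
      rw [← hS.eq_conj_of_ne hconj hx hy hz hxy hxz hyz]
      exact hS.eq_conj_of_ne hconj hz hy hx hyz.symm hxz.symm hxy.symm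
    have hcomm : y * y * x = x * (y * y) := by
      nth_rw 2 [hx_conj]
      group
    calc z * z = x * (y * y) * x⁻¹ := by rw [hz_conj]; group
      _ = y * y := by rw [← hcomm, mul_inv_cancel_right]
  have hab_sq : a * a = b * b :=
    (conj_sq hb ha hc hab.symm hbc hac).symm.trans (conj_sq ha hb hc hab hac hbc)
  have hswap : b⁻¹ * a = b * a⁻¹ := by
    rw [inv_mul_eq_iff_eq_mul, ← mul_assoc, eq_mul_inv_iff_mul_eq, hab_sq]
  have hcube : (a * b⁻¹) ^ 3 = 1 :=
    calc (a * b⁻¹) ^ 3 = a * (b⁻¹ * a) * (b⁻¹ * a) * b⁻¹ := by simp only [pow_three, mul_assoc]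
      _ = (a * b * a⁻¹) * (b * a * b⁻¹)⁻¹ := by rw [hswap]; group
      _ = c * c⁻¹ := by
        rw [← hS.eq_conj_of_ne hconj hb ha hc hab.symm hbc hac,
          ← hS.eq_conj_of_ne hconj ha hb hc hab hac hbc]
      _ = 1 := mul_inv_cancel c
  exact orderOf_eq_zero_iff'.1 (hS.orderOf_mul_inv_eq_zero ha hb hab) 3 three_pos hcube

theorem eq_empty_or_singleton_or_pair (hS : IsSeparatedCycleFree S)
    (hconj : ∀ u, ∀ c ∈ S, u * c * u⁻¹ ∈ S) :
    S = ∅ ∨ (∃ a, S = {a}) ∨ ∃ a b, a ≠ b ∧ S = {a, b} := by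
  obtain rfl | ⟨a, ha⟩ := S.eq_empty_or_nonempty
  · exact .inl rfl
  by_cases hb : ∃ b ∈ S, a ≠ b
  · obtain ⟨b, hb, hab⟩ := hb
    refine .inr (.inr ⟨a, b, hab, Set.Subset.antisymm (fun c hc => ?_) ?_⟩)
    · by_contra hc_notMem
      rw [Set.mem_insert_iff, Set.mem_singleton_iff, not_or] at hc_notMem
      exact hS.not_three hconj ha hb hc hab (Ne.symm hc_notMem.1) (Ne.symm hc_notMem.2)
    · exact Set.insert_subset ha (Set.singleton_subset_iff.2 hb)
  · push Not at hb
    exact .inr (.inl ⟨a, Set.eq_singleton_iff_unique_mem.2 ⟨ha, fun b hbS => (hb b hbS).symm⟩⟩)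

end IsSeparatedCycleFree

lemma commute_of_forall_conj_mem_pair {a b : G} (hab : a ≠ b)
    (hconj : ∀ u, ∀ c ∈ ({a, b} : Set G), u * c * u⁻¹ ∈ ({a, b} : Set G)) : Commute a b := by
  rcases hconj a b (.inr rfl) with hba | hbb
  · exact absurd (mul_left_cancel (mul_inv_eq_iff_eq_mul.1 hba)).symm hab
  · exact mul_inv_eq_iff_eq_mul.1 hbb

end SeparatedCycleFree

section CommutingPair

variable {G : Type*} [Group G] {a b : G}

/-- For commuting `a` and `b`, the homomorphism `(i, j) ↦ a ^ i * b ^ j` from `ℤ × ℤ`, written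
multiplicatively. -/
def zpowMulZpowHom (hab : Commute a b) : Multiplicative ℤ × Multiplicative ℤ →* G :=
  MonoidHom.noncommCoprod (zpowersHom G a) (zpowersHom G b) fun i j => by
    simpa only [zpowersHom_apply] using hab.zpow_zpow i.toAdd j.toAdd

lemma zpowMulZpowHom_apply (hab : Commute a b) (x : Multiplicative ℤ × Multiplicative ℤ) :
    zpowMulZpowHom hab x = a ^ x.1.toAdd * b ^ x.2.toAdd := rfl

theorem mem_closure_pair_iff_of_commute (hab : Commute a b) {u : G} :
    u ∈ Subgroup.closure {a, b} ↔ ∃ i j : ℤ, a ^ i * b ^ j = u := by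
  have hrange : Subgroup.closure {a, b} = (zpowMulZpowHom hab).range := by
    rw [zpowMulZpowHom, MonoidHom.noncommCoprod_range, Set.insert_eq, Subgroup.closure_union,
      ← Subgroup.zpowers_eq_closure, ← Subgroup.zpowers_eq_closure]
    rfl
  simp only [hrange, MonoidHom.mem_range, zpowMulZpowHom_apply, Prod.exists, Multiplicative.exists,
    toAdd_ofAdd]

lemma isCyclic_ker_zpowMulZpowHom (hab : Commute a b) (horder : orderOf (a * b⁻¹) = 0) :
    IsCyclic (zpowMulZpowHom hab).ker := by
  let exponentSum := (MonoidHom.coprod (.id (Multiplicative ℤ)) (.id _)).comp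
    (zpowMulZpowHom hab).ker.subtype
  refine isCyclic_of_injective exponentSum ((injective_iff_map_eq_one exponentSum).2 ?_)
  rintro ⟨⟨i, j⟩, hker⟩ hsum
  obtain rfl : j = i⁻¹ := eq_inv_of_mul_eq_one_right hsum
  have hpow : (a * b⁻¹) ^ i.toAdd = 1 := by
    rw [hab.inv_right.mul_zpow, inv_zpow']
    exact hker
  have hi : i.toAdd = 0 := by
    rwa [← zpow_zero (a * b⁻¹), (injective_zpow_iff_not_isOfFinOrder.2
      (orderOf_eq_zero_iff.1 horder)).eq_iff] at hpow
  obtain rfl : i = 1 := hi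
  rfl

theorem exists_zpow_mul_zpow_eq_one_iff_of_commute (hab : Commute a b)
    (horder : orderOf (a * b⁻¹) = 0) :
    ∃ m n : ℤ, ∀ i j : ℤ, a ^ i * b ^ j = 1 ↔ ∃ l : ℤ, i = l * m ∧ j = -(l * n) := by
  have := isCyclic_ker_zpowMulZpowHom hab horder
  obtain ⟨⟨⟨m, n⟩, hmn⟩, hgen⟩ := IsCyclic.exists_generator (α := (zpowMulZpowHom hab).ker)
  refine ⟨m.toAdd, -n.toAdd, fun i j => ⟨fun hij => ?_, ?_⟩⟩
  · obtain ⟨l, hl⟩ := Subgroup.mem_zpowers_iff.1 (hgen ⟨(.ofAdd i, .ofAdd j), hij⟩)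
    obtain ⟨hi, hj⟩ := Prod.ext_iff.1 (congrArg Subtype.val hl)
    refine ⟨l, ?_, ?_⟩
    · simpa using (congrArg Multiplicative.toAdd hi).symm
    · simpa using (congrArg Multiplicative.toAdd hj).symm
  · rintro ⟨l, rfl, rfl⟩
    have hl := ((zpowMulZpowHom hab).ker.zpow_mem hmn l)
    simpa [MonoidHom.mem_ker, zpowMulZpowHom_apply] using hl

end CommutingPair

section Subcoalgebra

variable {K : Type} [Field K] {H : Type} [AddCommGroup H] [Module K H]

lemma tmul_mem_range_map_subtype {D : Submodule K H} {a b : H} (ha : a ∈ D) (hb : b ∈ D) :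
    a ⊗ₜ[K] b ∈ LinearMap.range (TensorProduct.map D.subtype D.subtype) :=
  ⟨⟨a, ha⟩ ⊗ₜ ⟨b, hb⟩, TensorProduct.map_tmul _ _ _ _⟩

lemma lid_rTensor_map_subtype {D : Submodule K H} (f : H →ₗ[K] K) (t : D ⊗[K] D) :
    TensorProduct.lid K H (LinearMap.rTensor H f (TensorProduct.map D.subtype D.subtype t)) =
      TensorProduct.lid K D (LinearMap.rTensor D (f ∘ₗ D.subtype) t) := by
  induction t with
  | zero => simp only [map_zero, ZeroMemClass.coe_zero]
  | tmul y z => simp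
  | add s t hs ht => simp only [map_add, hs, ht, Submodule.coe_add]

variable [Coalgebra K H] {D E : Submodule K H} {g h p x : H}

lemma isSubcoalgebra_iff_le_comap : IsSubcoalgebra K H D ↔
    D ≤ (LinearMap.range (TensorProduct.map D.subtype D.subtype)).comap Coalgebra.comul :=
  Iff.rfl

lemma IsSubcoalgebra.sup (hD : IsSubcoalgebra K H D) (hE : IsSubcoalgebra K H E) :
    IsSubcoalgebra K H (D ⊔ E) :=
  isSubcoalgebra_iff_le_comap.2 (sup_le
    (fun _ hd => TensorProduct.range_mapIncl_mono le_sup_left le_sup_left (hD _ hd))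
    fun _ he => TensorProduct.range_mapIncl_mono le_sup_right le_sup_right (hE _ he))

lemma IsGrouplike.isSubcoalgebra_span (hg : IsGrouplike K H g) :
    IsSubcoalgebra K H (Submodule.span K {g}) := by
  rw [isSubcoalgebra_iff_le_comap, Submodule.span_singleton_le_iff_mem, Submodule.mem_comap, hg.2]
  exact tmul_mem_range_map_subtype (Submodule.mem_span_singleton_self g)
    (Submodule.mem_span_singleton_self g)

lemma IsSubcoalgebra.sup_span_of_mem_skewPrim (hD : IsSubcoalgebra K H D) (hg : g ∈ D)
    (hh : h ∈ D) (hx : x ∈ skewPrim K H g h) : IsSubcoalgebra K H (D ⊔ Submodule.span K {x}) := by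
  have hxD : x ∈ D ⊔ Submodule.span K {x} :=
    Submodule.mem_sup_right (Submodule.mem_span_singleton_self x)
  refine isSubcoalgebra_iff_le_comap.2 (sup_le
    (fun _ hd => TensorProduct.range_mapIncl_mono le_sup_left le_sup_left (hD _ hd)) ?_)
  rw [Submodule.span_singleton_le_iff_mem, Submodule.mem_comap, (mem_skewPrim K H).1 hx]
  exact add_mem (tmul_mem_range_map_subtype (Submodule.mem_sup_left hg) hxD)
    (tmul_mem_range_map_subtype hxD (Submodule.mem_sup_left hh))

lemma IsGrouplike.eq_of_mem_span_singleton (hp : IsGrouplike K H p) (hg : IsGrouplike K H g)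
    (hpg : p ∈ Submodule.span K {g}) : p = g := by
  obtain ⟨r, rfl⟩ := Submodule.mem_span_singleton.1 hpg
  have hr : r = 1 := by simpa [hg.1] using hp.1
  rw [hr, one_smul]

theorem IsGrouplike.mem_or_mem_of_mem_sup (hp : IsGrouplike K H p) (hD : IsSubcoalgebra K H D)
    (hE : IsSubcoalgebra K H E) (hpDE : p ∈ D ⊔ E) : p ∈ D ∨ p ∈ E := by
  by_contra! ⟨hpD, hpE⟩
  obtain ⟨f, hfp, hfD⟩ := Submodule.exists_le_ker_of_notMem hpD
  let contract : H ⊗[K] H →ₗ[K] H := (TensorProduct.lid K H).toLinearMap ∘ₗ LinearMap.rTensor H f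
  have hDE : D ⊔ E ≤ E.comap (contract ∘ₗ Coalgebra.comul) := by
    refine sup_le (fun d hd => ?_) fun e he => ?_
    · obtain ⟨t, ht⟩ := hD d hd
      have hf : f ∘ₗ D.subtype = 0 := LinearMap.ext fun y => hfD y.2
      have hzero : contract (Coalgebra.comul d) = 0 := by
        rw [← ht]
        exact (lid_rTensor_map_subtype f t).trans (by simp [hf])
      rw [Submodule.mem_comap, LinearMap.comp_apply, hzero]
      exact zero_mem E
    · obtain ⟨t, ht⟩ := hE e he
      have hval : contract (Coalgebra.comul e) =
          TensorProduct.lid K E (LinearMap.rTensor E (f ∘ₗ E.subtype) t) := by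
        rw [← ht]
        exact lid_rTensor_map_subtype f t
      rw [Submodule.mem_comap, LinearMap.comp_apply, hval]
      exact Submodule.coe_mem _
  have hpE' : f p • p ∈ E := by simpa [contract, hp.2] using hDE hpDE
  exact hpE ((Submodule.smul_mem_iff _ hfp).1 hpE')

theorem IsGrouplike.mem_of_mem_sup_span (hp : IsGrouplike K H p) (hD : IsSubcoalgebra K H D)
    (hg : g ∈ D) (hh : h ∈ D) (hx : x ∈ skewPrim K H g h)
    (hpDx : p ∈ D ⊔ Submodule.span K {x}) : p ∈ D := by
  by_contra hpD
  obtain ⟨f, hfp, hfD⟩ := Submodule.exists_le_ker_of_notMem hpD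
  have hker : D ⊔ Submodule.span K {x} ≤
      LinearMap.ker (TensorProduct.map f f ∘ₗ Coalgebra.comul) := by
    refine sup_le (fun d hd => ?_) ((Submodule.span_singleton_le_iff_mem _ _).2 ?_)
    · obtain ⟨t, ht⟩ := hD d hd
      have hf : f ∘ₗ D.subtype = 0 := LinearMap.ext fun y => hfD y.2
      rw [LinearMap.mem_ker, LinearMap.comp_apply, ← ht, ← LinearMap.comp_apply,
        ← TensorProduct.map_comp, hf, TensorProduct.map_zero_left, LinearMap.zero_apply]
    · rw [LinearMap.mem_ker, LinearMap.comp_apply, (mem_skewPrim K H).1 hx, map_add,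
        TensorProduct.map_tmul, TensorProduct.map_tmul, LinearMap.mem_ker.1 (hfD hg),
        LinearMap.mem_ker.1 (hfD hh), zero_tmul, tmul_zero, add_zero]
  have hpp : f p ⊗ₜ[K] f p = 0 := by
    simpa [hp.2] using hker hpDx
  exact hfp (eq_zero_of_tmul_eq_zero hfp hpp)

end Subcoalgebra

section LinkIndecomposable

variable {K : Type} [Field K] {H : Type} [Ring H] [Bialgebra K H] {B D E : Submodule K H}
  {g h x : H}

lemma mem_span_sub_comm : x ∈ Submodule.span K {g - h} ↔ x ∈ Submodule.span K {h - g} := by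
  rw [← neg_sub, ← Set.neg_singleton, Submodule.span_neg]

lemma LinkedIn.symm (hgh : LinkedIn K H D g h) : LinkedIn K H D h g :=
  let ⟨x, hxD, hx, hnt⟩ := hgh
  ⟨x, hxD, hx.symm, mt mem_span_sub_comm.1 hnt⟩

lemma LinkedIn.mono (hDE : D ≤ E) (hgh : LinkedIn K H D g h) : LinkedIn K H E g h :=
  let ⟨x, hxD, hx⟩ := hgh
  ⟨x, hDE hxD, hx⟩

lemma connectedOn_of_forall_reflTransGen
    (hD : ∀ p, IsGrouplike K H p → p ∈ D → Relation.ReflTransGen (LinkedIn K H D) p g) :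
    ConnectedOn K H D := fun p q hp hpD hq hqD =>
  have : Std.Symm (LinkedIn K H D) := ⟨fun _ _ => LinkedIn.symm⟩
  (hD p hp hpD).trans (Relation.ReflTransGen.stdSymm.symm _ _ (hD q hq hqD))

theorem IsLIC1.mem_of_mem_skewPrim (hB : IsLIC1 K H B) (hg : IsGrouplike K H g) (hgB : g ∈ B)
    (hh : IsGrouplike K H h) (hx : x ∈ skewPrim K H g h ∨ x ∈ skewPrim K H h g)
    (hnt : x ∉ Submodule.span K {g - h}) : h ∈ B ∧ x ∈ B := by
  let D := B ⊔ Submodule.span K {h}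
  let E := D ⊔ Submodule.span K {x}
  have hBE : B ≤ E := le_sup_left.trans le_sup_left
  have hhD : h ∈ D := Submodule.mem_sup_right (Submodule.mem_span_singleton_self h)
  have hxE : x ∈ E := Submodule.mem_sup_right (Submodule.mem_span_singleton_self x)
  have hgD : g ∈ D := Submodule.mem_sup_left hgB
  have hD : IsSubcoalgebra K H D := hB.subcoalg.sup hh.isSubcoalgebra_span
  have hE : IsSubcoalgebra K H E :=
    hx.elim (hD.sup_span_of_mem_skewPrim hgD hhD) (hD.sup_span_of_mem_skewPrim hhD hgD)
  have hgrouplike {p : H} (hp : IsGrouplike K H p) (hpE : p ∈ E) : p ∈ B ∨ p = h := by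
    have hpD : p ∈ D := hx.elim (fun hx => hp.mem_of_mem_sup_span hD hgD hhD hx hpE)
      fun hx => hp.mem_of_mem_sup_span hD hhD hgD hx hpE
    exact (hp.mem_or_mem_of_mem_sup hB.subcoalg hh.isSubcoalgebra_span hpD).imp_right
      (hp.eq_of_mem_span_singleton hh)
  have hconnected : ConnectedOn K H E :=
    connectedOn_of_forall_reflTransGen (g := g) fun p hp hpE => by
      obtain hpB | rfl := hgrouplike hp hpE
      · exact Relation.ReflTransGen.mono (fun _ _ => LinkedIn.mono hBE) _ _
          (hB.connected p g hp hpB hg hgB)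
      · exact .single (LinkedIn.symm ⟨x, hxE, hx, hnt⟩)
  have hEB : E = B := hB.maximal E hE hconnected hBE
  exact ⟨hEB ▸ Submodule.mem_sup_left hhD, hEB ▸ hxE⟩

theorem IsLIC1.skewPrim_le (hB : IsLIC1 K H B) (hg : grouplikeIn K H B g)
    (hh : grouplikeIn K H B h) : skewPrim K H g h ≤ B := by
  intro x hx
  by_cases hnt : x ∈ Submodule.span K {g - h}
  · exact (Submodule.span_singleton_le_iff_mem _ _).2 (sub_mem hg.2 hh.2) hnt
  · exact (hB.mem_of_mem_skewPrim hg.1 hg.2 hh.1 (.inl hx) hnt).2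

end LinkIndecomposable

section Translation

variable {K : Type} [Field K] {H : Type} [Ring H] [HopfAlgebra K H] {g h u x : H}

lemma isGrouplike_iff_isGroupLikeElem : IsGrouplike K H g ↔ IsGroupLikeElem K g :=
  ⟨fun hg => ⟨hg.1, hg.2⟩, fun hg => ⟨hg.1, hg.2⟩⟩

lemma isGrouplike_val (c : GroupLike K H) : IsGrouplike K H c :=
  isGrouplike_iff_isGroupLikeElem.2 c.2

lemma IsGrouplike.exists_val_eq (hg : IsGrouplike K H g) : ∃ u : GroupLike K H, (u : H) = g :=
  ⟨⟨g, isGrouplike_iff_isGroupLikeElem.1 hg⟩, rfl⟩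

lemma mul_left_mem_skewPrim (hu : IsGrouplike K H u) (hx : x ∈ skewPrim K H g h) :
    u * x ∈ skewPrim K H (u * g) (u * h) := by
  rw [mem_skewPrim] at hx ⊢
  rw [Bialgebra.comul_mul, hu.2, hx, mul_add, Algebra.TensorProduct.tmul_mul_tmul,
    Algebra.TensorProduct.tmul_mul_tmul]

lemma mul_right_mem_skewPrim (hu : IsGrouplike K H u) (hx : x ∈ skewPrim K H g h) :
    x * u ∈ skewPrim K H (g * u) (h * u) := by
  rw [mem_skewPrim] at hx ⊢
  rw [Bialgebra.comul_mul, hu.2, hx, add_mul, Algebra.TensorProduct.tmul_mul_tmul,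
    Algebra.TensorProduct.tmul_mul_tmul]

lemma IsGrouplike.isUnit (hu : IsGrouplike K H u) : IsUnit u :=
  (isGrouplike_iff_isGroupLikeElem.1 hu).isUnit

lemma HasArrow.mul_left (hu : IsGrouplike K H u) (hgh : HasArrow K g h) :
    HasArrow K (u * g) (u * h) := by
  obtain ⟨x, hx, hnt⟩ := hasArrow_iff.1 hgh
  refine hasArrow_iff.2 ⟨u * x, mul_left_mem_skewPrim hu hx, fun hmem => hnt ?_⟩
  obtain ⟨r, hr⟩ := Submodule.mem_span_singleton.1 hmem
  rw [← mul_sub, ← mul_smul_comm] at hr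
  exact Submodule.mem_span_singleton.2 ⟨r, hu.isUnit.mul_left_cancel hr⟩

lemma HasArrow.mul_right (hu : IsGrouplike K H u) (hgh : HasArrow K g h) :
    HasArrow K (g * u) (h * u) := by
  obtain ⟨x, hx, hnt⟩ := hasArrow_iff.1 hgh
  refine hasArrow_iff.2 ⟨x * u, mul_right_mem_skewPrim hu hx, fun hmem => hnt ?_⟩
  obtain ⟨r, hr⟩ := Submodule.mem_span_singleton.1 hmem
  rw [← sub_mul, ← smul_mul_assoc] at hr
  exact Submodule.mem_span_singleton.2 ⟨r, hu.isUnit.mul_right_cancel hr⟩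

theorem rank_skewPrim_mul_left (hu : IsGrouplike K H u) :
    Module.rank K (skewPrim K H (u * g) (u * h)) = Module.rank K (skewPrim K H g h) := by
  obtain ⟨u, rfl⟩ := hu.isUnit
  have hu_inv : IsGrouplike K H (u⁻¹ : Hˣ) :=
    isGrouplike_iff_isGroupLikeElem.2
      (isGroupLikeElem_unitsInv.2 (isGrouplike_iff_isGroupLikeElem.1 hu))
  have hmap : skewPrim K H (u * g) (u * h) =
      (skewPrim K H g h).map (u.mulLeftLinearEquiv K H).toLinearMap := by
    ext x
    rw [Submodule.mem_map_equiv, Units.symm_mulLeftLinearEquiv_apply]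
    refine ⟨fun hx => ?_, fun hx => ?_⟩
    · simpa only [Units.inv_mul_cancel_left] using mul_left_mem_skewPrim hu_inv hx
    · simpa only [Units.mul_inv_cancel_left] using mul_left_mem_skewPrim hu hx
  rw [hmap, LinearEquiv.rank_map_eq]

variable (K H) in
/-- The labels of the Ext-quiver as a Cayley graph of the group of grouplikes: the targets of the
arrows starting at `1`. -/
def arrowLabels : Set (GroupLike K H) := {c | HasArrow K (1 : H) (c : H)}

lemma hasArrow_val_iff {u v : GroupLike K H} :
    HasArrow K (u : H) (v : H) ↔ u⁻¹ * v ∈ arrowLabels K H := by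
  refine ⟨fun huv => ?_, fun huv => ?_⟩
  · have := huv.mul_left (isGrouplike_val u⁻¹)
    rwa [← GroupLike.val_mul, ← GroupLike.val_mul, inv_mul_cancel, GroupLike.val_one] at this
  · have := HasArrow.mul_left (isGrouplike_val u) huv
    rwa [mul_one, ← GroupLike.val_mul, mul_inv_cancel_left] at this

lemma conj_mem_arrowLabels (u c : GroupLike K H) (hc : c ∈ arrowLabels K H) :
    u * c * u⁻¹ ∈ arrowLabels K H := by
  have := (HasArrow.mul_left (isGrouplike_val u) hc).mul_right (isGrouplike_val u⁻¹)
  rwa [mul_one, ← GroupLike.val_mul, ← GroupLike.val_mul, ← GroupLike.val_mul, mul_inv_cancel,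
    GroupLike.val_one] at this

theorem DiscreteCorepType.isSeparatedCycleFree_arrowLabels [Infinite K]
    (hdiscrete : DiscreteCorepType K H) : IsSeparatedCycleFree (arrowLabels K H) :=
  fun _ h g hh_inj hg_inj hleft hright =>
    hdiscrete.not_hasArrow_cycle (fun j => isGrouplike_val (h j)) (fun j => isGrouplike_val (g j))
      (GroupLike.val_injective.comp hh_inj) (GroupLike.val_injective.comp hg_inj)
      (fun j => hasArrow_val_iff.2 (hleft j)) fun j => hasArrow_val_iff.2 (hright j)

end Translation

section ComponentGroup

variable {K : Type} [Field K] {H : Type} [Ring H] [HopfAlgebra K H] {B : Submodule K H}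

lemma LinkedIn.exists_val_eq {u : GroupLike K H} {h : H} (huh : LinkedIn K H B u h) :
    ∃ v : GroupLike K H, v = h ∧ u⁻¹ * v ∈ Subgroup.closure (arrowLabels K H) := by
  obtain ⟨x, -, hx | hx, hnt⟩ := huh
  · have hh : IsGrouplike K H h := (isGrouplike_iff_of_mem_skewPrim hx hnt).1 (isGrouplike_val u)
    obtain ⟨v, rfl⟩ := hh.exists_val_eq
    exact ⟨v, rfl, Subgroup.subset_closure (hasArrow_val_iff.1 (hasArrow_iff.2 ⟨x, hx, hnt⟩))⟩
  · rw [mem_span_sub_comm] at hnt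
    have hh : IsGrouplike K H h := (isGrouplike_iff_of_mem_skewPrim hx hnt).2 (isGrouplike_val u)
    obtain ⟨v, rfl⟩ := hh.exists_val_eq
    refine ⟨v, rfl, ?_⟩
    rw [← inv_mem_iff, mul_inv_rev, inv_inv]
    exact Subgroup.subset_closure (hasArrow_val_iff.1 (hasArrow_iff.2 ⟨x, hx, hnt⟩))

lemma exists_val_eq_of_reflTransGen_linkedIn {h : H}
    (hpath : Relation.ReflTransGen (LinkedIn K H B) 1 h) :
    ∃ v ∈ Subgroup.closure (arrowLabels K H), (v : H) = h := by
  induction hpath with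
  | refl => exact ⟨1, one_mem _, GroupLike.val_one⟩
  | tail _ hlink ih =>
    obtain ⟨u, hu, rfl⟩ := ih
    obtain ⟨v, rfl, huv⟩ := hlink.exists_val_eq
    exact ⟨v, (Subgroup.mul_mem_cancel_left _ (inv_mem hu)).1 huv, rfl⟩

theorem IsLIC1.val_mem_iff (hB : IsLIC1 K H B) {u : GroupLike K H} :
    (u : H) ∈ B ↔ u ∈ Subgroup.closure (arrowLabels K H) := by
  refine ⟨fun hu => ?_, fun hu => ?_⟩
  · have hone : IsGrouplike K H 1 := isGrouplike_iff_isGroupLikeElem.2 .one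
    obtain ⟨v, hv, hvu⟩ := exists_val_eq_of_reflTransGen_linkedIn
      (hB.connected 1 u hone hB.one_mem (isGrouplike_val u) hu)
    rwa [← GroupLike.val_injective hvu]
  · induction hu using Subgroup.closure_induction_right with
    | one => rw [GroupLike.val_one]; exact hB.one_mem
    | mul_right u _ c hc hu =>
      have harrow : HasArrow K (u : H) (u * c : GroupLike K H) :=
        hasArrow_val_iff.2 (by rwa [inv_mul_cancel_left])
      obtain ⟨x, hx, hnt⟩ := hasArrow_iff.1 harrow
      exact (hB.mem_of_mem_skewPrim (isGrouplike_val u) hu (isGrouplike_val _) (.inl hx) hnt).1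
    | mul_inv_cancel u _ c hc hu =>
      have harrow : HasArrow K ((u * c⁻¹ : GroupLike K H) : H) u :=
        hasArrow_val_iff.2 (by rwa [mul_inv_rev, inv_inv, inv_mul_cancel_right])
      obtain ⟨x, hx, hnt⟩ := hasArrow_iff.1 harrow
      rw [mem_span_sub_comm] at hnt
      exact (hB.mem_of_mem_skewPrim (isGrouplike_val u) hu (isGrouplike_val _) (.inr hx) hnt).1

end ComponentGroup

section QuiverOfComponent

variable {K : Type} [Field K] {H : Type} [Ring H] [HopfAlgebra K H] {B : Submodule K H}

theorem IsLIC1.grouplikeIn_iff (hB : IsLIC1 K H B) {g : H} :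
    grouplikeIn K H B g ↔ ∃ u ∈ Subgroup.closure (arrowLabels K H), (u : H) = g := by
  refine ⟨fun hg => ?_, ?_⟩
  · obtain ⟨u, rfl⟩ := hg.1.exists_val_eq
    exact ⟨u, hB.val_mem_iff.1 hg.2, rfl⟩
  · rintro ⟨u, hu, rfl⟩
    exact ⟨isGrouplike_val u, hB.val_mem_iff.2 hu⟩

lemma IsLIC1.grouplikeIn_val_of_mem_arrowLabels (hB : IsLIC1 K H B) {a : GroupLike K H}
    (ha : a ∈ arrowLabels K H) : grouplikeIn K H B a :=
  hB.grouplikeIn_iff.2 ⟨a, Subgroup.subset_closure ha, rfl⟩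

theorem IsLIC1.arrowsEq_ite [Infinite K] (hB : IsLIC1 K H B) (hdiscrete : DiscreteCorepType K H)
    {p : H → H → Prop} [∀ g h, Decidable (p g h)]
    (hp : ∀ u v : GroupLike K H, u⁻¹ * v ∈ arrowLabels K H ↔ p u v) {g h : H}
    (hg : grouplikeIn K H B g) (hh : grouplikeIn K H B h) :
    arrowsEq K H B g h (if p g h then 1 else 0) := by
  have harrow : HasArrow K g h ↔ p g h := by
    obtain ⟨u, rfl⟩ := hg.1.exists_val_eq
    obtain ⟨v, rfl⟩ := hh.1.exists_val_eq
    exact hasArrow_val_iff.trans (hp u v)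
  rw [arrowsEq, inf_eq_left.2 (hB.skewPrim_le hg hh), hdiscrete.rank_skewPrim hg.1 hh.1]
  simp only [harrow]
  split_ifs <;> norm_num

lemma zp_val (a : GroupLike K H) (i : ℤ) : zp (a : H) (inv' K H a) i = (a ^ i : GroupLike K H) := by
  have hinv : inv' K H (a : H) = (a⁻¹ : GroupLike K H) := rfl
  rw [zp, hinv, ← GroupLike.val_pow, ← GroupLike.val_pow, ← GroupLike.val_mul, inv_pow,
    ← zpow_natCast, ← zpow_natCast, ← zpow_neg, ← zpow_add]
  congr 2
  omega

lemma val_pow_eq_one_iff {a : GroupLike K H} {k : ℕ} : (a : H) ^ k = 1 ↔ a ^ k = 1 := by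
  rw [← GroupLike.val_pow, ← GroupLike.val_one (R := K), GroupLike.val_inj]

lemma exists_val_zpow_eq_iff {a : GroupLike K H} {g : H} :
    (∃ k : ℤ, (a ^ k : GroupLike K H) = g) ↔ ∃ i j : ℕ, (a : H) ^ i * g = (a : H) ^ j := by
  constructor
  · rintro ⟨k, rfl⟩
    refine ⟨(-k).toNat, k.toNat, ?_⟩
    rw [← GroupLike.val_pow, ← GroupLike.val_pow, ← GroupLike.val_mul, ← zpow_natCast,
      ← zpow_natCast, ← zpow_add]
    congr 2
    omega
  · rintro ⟨i, j, hij⟩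
    refine ⟨j - i, (isGrouplike_val (a ^ i)).isUnit.mul_left_cancel ?_⟩
    rw [GroupLike.val_pow, hij, ← GroupLike.val_pow, ← GroupLike.val_pow, ← GroupLike.val_mul,
      ← zpow_natCast, ← zpow_natCast, ← zpow_add, add_sub_cancel]

theorem IsLIC1.singleVertexQuiver [Infinite K] (hB : IsLIC1 K H B)
    (hdiscrete : DiscreteCorepType K H) (hS : arrowLabels K H = ∅) : SingleVertexQuiver K H B := by
  have hgrouplike (g : H) : grouplikeIn K H B g ↔ g = 1 := by
    rw [hB.grouplikeIn_iff, hS, Subgroup.closure_empty]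
    simp only [Subgroup.mem_bot, exists_eq_left, GroupLike.val_one, eq_comm]
  have hone := (hgrouplike 1).2 rfl
  refine ⟨hgrouplike, ?_⟩
  simpa only [if_false] using
    hB.arrowsEq_ite hdiscrete (p := fun _ _ => False) (fun u v => by rw [hS]; rfl) hone hone

section OneLabel

variable {a : GroupLike K H}

lemma IsLIC1.grouplikeIn_iff_of_eq_singleton (hB : IsLIC1 K H B) (hS : arrowLabels K H = {a})
    {g : H} : grouplikeIn K H B g ↔ ∃ k : ℤ, (a ^ k : GroupLike K H) = g := by
  simp only [hB.grouplikeIn_iff, hS, Subgroup.mem_closure_singleton, exists_exists_eq_and]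

lemma IsLIC1.arrowsEq_of_eq_singleton [Infinite K] (hB : IsLIC1 K H B)
    (hdiscrete : DiscreteCorepType K H) (hS : arrowLabels K H = {a}) {g h : H}
    (hg : grouplikeIn K H B g) (hh : grouplikeIn K H B h) :
    arrowsEq K H B g h (if h = g * a then 1 else 0) := by
  refine hB.arrowsEq_ite hdiscrete (p := fun g h => h = g * a) (fun u v => ?_) hg hh
  rw [hS, Set.mem_singleton_iff, inv_mul_eq_iff_eq_mul, ← GroupLike.val_mul, GroupLike.val_inj]

theorem IsLIC1.cycleQuiver [Infinite K] (hB : IsLIC1 K H B) (hdiscrete : DiscreteCorepType K H)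
    (hS : arrowLabels K H = {a}) (ha : IsOfFinOrder a) : CycleQuiver K H B := by
  refine ⟨a, orderOf a, ha.orderOf_pos,
    hB.grouplikeIn_val_of_mem_arrowLabels (hS ▸ Set.mem_singleton a),
    val_pow_eq_one_iff.2 (pow_orderOf_eq_one a),
    fun k hk0 hk => mt val_pow_eq_one_iff.1 (pow_ne_one_of_lt_orderOf hk0.ne' hk),
    fun g => ?_, fun _ _ => hB.arrowsEq_of_eq_singleton hdiscrete hS⟩
  have hpowers (u : GroupLike K H) : (∃ k : ℤ, a ^ k = u) ↔ ∃ k : ℕ, a ^ k = u := by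
    rw [← Subgroup.mem_zpowers_iff, ← ha.mem_powers_iff_mem_zpowers, Submonoid.mem_powers_iff]
  rw [hB.grouplikeIn_iff_of_eq_singleton hS]
  refine ⟨fun ⟨k, hk⟩ => ?_, fun ⟨k, hk⟩ => ⟨k, by rw [hk, zpow_natCast, GroupLike.val_pow]⟩⟩
  obtain ⟨j, hj⟩ := (hpowers (a ^ k)).1 ⟨k, rfl⟩
  exact ⟨j, by rw [← hk, ← hj, GroupLike.val_pow]⟩

theorem IsLIC1.lineQuiver [Infinite K] (hB : IsLIC1 K H B) (hdiscrete : DiscreteCorepType K H)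
    (hS : arrowLabels K H = {a}) (ha : ¬ IsOfFinOrder a) : LineQuiver K H B :=
  ⟨a, hB.grouplikeIn_val_of_mem_arrowLabels (hS ▸ Set.mem_singleton a),
    fun k hk hak => ha (isOfFinOrder_iff_pow_eq_one.2 ⟨k, hk, val_pow_eq_one_iff.1 hak⟩),
    fun _ => (hB.grouplikeIn_iff_of_eq_singleton hS).trans exists_val_zpow_eq_iff,
    fun _ _ => hB.arrowsEq_of_eq_singleton hdiscrete hS⟩

end OneLabel

section TwoLabels

variable {a b : GroupLike K H}

lemma IsLIC1.grouplikeIn_iff_of_eq_pair (hB : IsLIC1 K H B) (hab : Commute a b)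
    (hS : arrowLabels K H = {a, b}) {g : H} :
    grouplikeIn K H B g ↔ ∃ i j : ℤ, g = (a ^ i * b ^ j : GroupLike K H) := by
  simp only [hB.grouplikeIn_iff, hS, mem_closure_pair_iff_of_commute hab]
  exact ⟨fun ⟨_, ⟨i, j, hu⟩, hg⟩ => ⟨i, j, hu ▸ hg.symm⟩,
    fun ⟨i, j, hg⟩ => ⟨_, ⟨i, j, rfl⟩, hg.symm⟩⟩

lemma IsLIC1.arrowsEq_of_eq_pair [Infinite K] (hB : IsLIC1 K H B)
    (hdiscrete : DiscreteCorepType K H) (hS : arrowLabels K H = {a, b}) {g h : H}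
    (hg : grouplikeIn K H B g) (hh : grouplikeIn K H B h) :
    arrowsEq K H B g h (if h = g * a ∨ h = g * b then 1 else 0) := by
  refine hB.arrowsEq_ite hdiscrete (p := fun g h => h = g * a ∨ h = g * b) (fun u v => ?_) hg hh
  rw [hS, Set.mem_insert_iff, Set.mem_singleton_iff, inv_mul_eq_iff_eq_mul, inv_mul_eq_iff_eq_mul,
    ← GroupLike.val_mul, ← GroupLike.val_mul, GroupLike.val_inj, GroupLike.val_inj]

theorem IsLIC1.gridQuiverOn [Infinite K] (hB : IsLIC1 K H B) (hdiscrete : DiscreteCorepType K H)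
    (hS : arrowLabels K H = {a, b}) (hab : Commute a b) {m n : ℤ}
    (hmn : ∀ i j : ℤ, a ^ i * b ^ j = 1 ↔ ∃ l : ℤ, i = l * m ∧ j = -(l * n)) :
    GridQuiverOn K H B a b m n := by
  have hval (i j : ℤ) : zp (a : H) (inv' K H a) i * zp (b : H) (inv' K H b) j =
      (a ^ i * b ^ j : GroupLike K H) := by rw [zp_val, zp_val, GroupLike.val_mul]
  refine ⟨hB.grouplikeIn_val_of_mem_arrowLabels (hS ▸ Set.mem_insert a _),
    hB.grouplikeIn_val_of_mem_arrowLabels (hS ▸ Set.mem_insert_of_mem a rfl), ?_,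
    a.2.mul_antipode_cancel, a.2.antipode_mul_cancel, b.2.mul_antipode_cancel,
    b.2.antipode_mul_cancel, fun i j => ?_, fun g => ?_,
    fun _ _ => hB.arrowsEq_of_eq_pair hdiscrete hS⟩
  · rw [← GroupLike.val_mul, ← GroupLike.val_mul, hab.eq]
  · rw [hval, ← GroupLike.val_one (R := K), GroupLike.val_inj, hmn]
  · simp only [hval, hB.grouplikeIn_iff_of_eq_pair hab hS]

end TwoLabels

lemma ne_of_zpow_mul_zpow_eq_one_iff {G : Type*} [Group G] {a b : G} (hab : a ≠ b) {m n : ℤ}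
    (hmn : ∀ i j : ℤ, a ^ i * b ^ j = 1 ↔ ∃ l : ℤ, i = l * m ∧ j = -(l * n)) :
    (m, n) ≠ (1, 1) ∧ (m, n) ≠ (-1, -1) := by
  have hne (l : ℤ) : ¬ (1 = l * m ∧ -1 = -(l * n)) := fun hl => hab <| by
    have := (hmn 1 (-1)).2 ⟨l, hl⟩
    rwa [zpow_one, zpow_neg_one, mul_inv_eq_one] at this
  refine ⟨fun hmn1 => ?_, fun hmn1 => ?_⟩ <;> obtain ⟨rfl, rfl⟩ := Prod.mk.inj hmn1
  · exact hne 1 (by norm_num)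
  · exact hne (-1) (by norm_num)

theorem IsLIC1.exists_gridQuiverOn [Infinite K] (hB : IsLIC1 K H B)
    (hdiscrete : DiscreteCorepType K H) {a b : GroupLike K H} (hab : a ≠ b)
    (hS : arrowLabels K H = {a, b}) :
    ∃ (a b : H) (m n : ℤ), ((m, n) : ℤ × ℤ) ≠ (1, 1) ∧ ((m, n) : ℤ × ℤ) ≠ (-1, -1) ∧
      GridQuiverOn K H B a b m n := by
  have ha : a ∈ arrowLabels K H := hS ▸ Set.mem_insert a _
  have hb : b ∈ arrowLabels K H := hS ▸ Set.mem_insert_of_mem a rfl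
  have hcomm : Commute a b :=
    commute_of_forall_conj_mem_pair hab fun u c hc => hS ▸ conj_mem_arrowLabels u c (hS ▸ hc)
  obtain ⟨m, n, hmn⟩ := exists_zpow_mul_zpow_eq_one_iff_of_commute hcomm
    (hdiscrete.isSeparatedCycleFree_arrowLabels.orderOf_mul_inv_eq_zero ha hb hab)
  obtain ⟨h1, h2⟩ := ne_of_zpow_mul_zpow_eq_one_iff hab hmn
  exact ⟨a, b, m, n, h1, h2, hB.gridQuiverOn hdiscrete hS hcomm hmn⟩

end QuiverOfComponent

section ExtQuiver

variable {K : Type} [Field K] [Infinite K] {H : Type} [Ring H] [HopfAlgebra K H]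
  {B : Submodule K H}

theorem IsLIC1.quiver_classification (hB : IsLIC1 K H B) (hdiscrete : DiscreteCorepType K H) :
    SingleVertexQuiver K H B ∨ CycleQuiver K H B ∨ LineQuiver K H B ∨
      ∃ (a b : H) (m n : ℤ), ((m, n) : ℤ × ℤ) ≠ (1, 1) ∧ ((m, n) : ℤ × ℤ) ≠ (-1, -1) ∧
        GridQuiverOn K H B a b m n := by
  obtain hS | ⟨a, hS⟩ | ⟨a, b, hab, hS⟩ :=
    hdiscrete.isSeparatedCycleFree_arrowLabels.eq_empty_or_singleton_or_pair conj_mem_arrowLabels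
  · exact .inl (hB.singleVertexQuiver hdiscrete hS)
  · by_cases ha : IsOfFinOrder a
    · exact .inr (.inl (hB.cycleQuiver hdiscrete hS ha))
    · exact .inr (.inr (.inl (hB.lineQuiver hdiscrete hS ha)))
  · exact .inr (.inr (.inr (hB.exists_gridQuiverOn hdiscrete hab hS)))

end ExtQuiver

section Cosets

variable {K : Type} [Field K] {H : Type} [Ring H] [HopfAlgebra K H] {B : Submodule K H}

theorem IsLIC1.exists_eq_mul_of_hasArrow (hB : IsLIC1 K H B) {g h : H} (hg : IsGrouplike K H g)
    (hh : IsGrouplike K H h) (hgh : HasArrow K g h) :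
    ∃ c : H, grouplikeIn K H B c ∧ h = g * c := by
  obtain ⟨u, rfl⟩ := hg.exists_val_eq
  obtain ⟨v, rfl⟩ := hh.exists_val_eq
  refine ⟨(u⁻¹ * v : GroupLike K H),
    hB.grouplikeIn_val_of_mem_arrowLabels (hasArrow_val_iff.1 hgh), ?_⟩
  rw [← GroupLike.val_mul, mul_inv_cancel_left]

theorem IsLIC1.rank_skewPrim_mul (hB : IsLIC1 K H B) {g u v : H} (hg : IsGrouplike K H g)
    (hu : grouplikeIn K H B u) (hv : grouplikeIn K H B v) :
    Module.rank K ↥(skewPrim K H (g * u) (g * v)) = Module.rank K ↥(skewPrim K H u v ⊓ B) := by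
  rw [rank_skewPrim_mul_left hg, inf_eq_left.2 (hB.skewPrim_le hu hv)]

end Cosets

theorem ext_quiver_of_discrete_pointed_hopf_general
    (K : Type) [Field K] [Infinite K]
    (H : Type) [Ring H] [HopfAlgebra K H]
    (hdiscrete : DiscreteCorepType K H) (B : Submodule K H) (hB : IsLIC1 K H B) :
    (SingleVertexQuiver K H B ∨ CycleQuiver K H B ∨ LineQuiver K H B ∨
      (∃ (a b : H) (m n : ℤ), ((m, n) : ℤ × ℤ) ≠ (1, 1) ∧ ((m, n) : ℤ × ℤ) ≠ (-1, -1) ∧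
        GridQuiverOn K H B a b m n)) ∧
    (∀ g h : H, IsGrouplike K H g → IsGrouplike K H h →
        ¬ (skewPrim K H g h ≤ Submodule.span K {g - h}) →
        ∃ c : H, grouplikeIn K H B c ∧ h = g * c) ∧
    (∀ g u v : H, IsGrouplike K H g → grouplikeIn K H B u → grouplikeIn K H B v →
        Module.rank K ↥(skewPrim K H (g * u) (g * v)) =
          Module.rank K ↥(skewPrim K H u v ⊓ B)) :=
  ⟨hB.quiver_classification hdiscrete,
    fun _ _ hg hh hgh => hB.exists_eq_mul_of_hasArrow hg hh hgh,
    fun _ _ _ hg hu hv => hB.rank_skewPrim_mul hg hu hv⟩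

theorem ext_quiver_of_discrete_pointed_hopf
    (K : Type) [Field K] [IsAlgClosed K]
    (H : Type) [Ring H] [HopfAlgebra K H]
    (hpointed : IsPointedCoalgebra K H) (hdiscrete : DiscreteCorepType K H)
    (B : Submodule K H) (hB : IsLIC1 K H B) :
    (SingleVertexQuiver K H B ∨ CycleQuiver K H B ∨ LineQuiver K H B ∨
      (∃ (a b : H) (m n : ℤ), ((m, n) : ℤ × ℤ) ≠ (1, 1) ∧ ((m, n) : ℤ × ℤ) ≠ (-1, -1) ∧
        GridQuiverOn K H B a b m n)) ∧
    -- moreover, the Ext-quiver of `H`-comodules is a disjoint union of copies of this quiver: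
    -- all arrows stay within left cosets of `G(B)`...
    (∀ g h : H, IsGrouplike K H g → IsGrouplike K H h →
        ¬ (skewPrim K H g h ≤ Submodule.span K {g - h}) →
        ∃ c : H, grouplikeIn K H B c ∧ h = g * c) ∧
    -- ...and the quiver on each coset is a copy of the Ext-quiver of `B` via translation
    (∀ g u v : H, IsGrouplike K H g → grouplikeIn K H B u → grouplikeIn K H B v →
        Module.rank K ↥(skewPrim K H (g * u) (g * v)) =
          Module.rank K ↥(skewPrim K H u v ⊓ B)) :=
  ext_quiver_of_discrete_pointed_hopf_general K H hdiscrete B hB
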